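/- arXiv:2103.04587 — 4 statements merged into one kernel-verified Lean document; each statement's English description precedes it below -/
import Mathlib

section
/- Let G be a tree on vertex set {1,…,m}, let λ₁ < λ₂ < … < λ_m be real numbers and Λ = diag(λ₁,…,λ_m). Let g : E(G) → ℕ, let N₀ ∈ ℕ satisfy N₀ > (max{g(e) : e ∈ E(G)})·diam(G), and set f(e) := N₀ + g(e) for e ∈ E(G). For i, j ∈ {1,…,m} let P(i,j) be the (unique shortest) path in G from i to j, let c(i,j) := ∏_{k ∈ V(P(i,j))∖{j}} (λ_j − λ_k)^{-1} (with c(j,j) := 1), and let s(i,j) := Σ_{e ∈ E(P(i,j))} f(e) (with s(j,j) := 0). Suppose t_n > 0 with t_n → 0, and for each n let A_n be a real symmetric m×m matrix with spectrum {λ₁,…,λ_m} such that A_n ∈ S(G), the (i,j)-entry of A_n equals t_n^{f({i,j})} for every edge {i,j} of G, and A_n → Λ as n → ∞. Let U_n = (u_n(i,j)) be an orthogonal matrix with nonnegative diagonal entries such that U_nᵀ A_n U_n = Λ. Then for all i, j ∈ {1,…,m}, u_n(i,j)/t_n^{s(i,j)} → c(i,j) as n → ∞. -/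
open Matrix Filter

/-- `A ∈ S(G)`: real symmetric matrix whose off-diagonal zero pattern is given by `G`. -/
def inS {V : Type*} (G : SimpleGraph V) (A : Matrix V V ℝ) : Prop :=
  A.IsSymm ∧ ∀ i j : V, i ≠ j → (A i j ≠ 0 ↔ G.Adj i j)

/-- The spectrum of a matrix, as the multiset of roots of its characteristic polynomial. -/
noncomputable def specMultiset {V : Type*} [Fintype V] [DecidableEq V]
    (A : Matrix V V ℝ) : Multiset ℝ :=
  A.charpoly.roots

/-- The number of distinct eigenvalues of a matrix. -/
noncomputable def qMat {V : Type*} [Fintype V] [DecidableEq V] (A : Matrix V V ℝ) : ℕ :=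
  (specMultiset A).toFinset.card

/-- `q(G)`: the minimum number of distinct eigenvalues over matrices in `S(G)`. -/
noncomputable def qGraph {V : Type*} [Fintype V] [DecidableEq V] (G : SimpleGraph V) : ℕ :=
  sInf {q | ∃ A : Matrix V V ℝ, inS G A ∧ qMat A = q}

/-- The strong spectral property. -/
def HasSSP {V : Type*} [Fintype V] [DecidableEq V] (A : Matrix V V ℝ) : Prop :=
  ∀ X : Matrix V V ℝ, X.IsSymm → A * X = X * A →
    Matrix.hadamard A X = 0 → Matrix.hadamard (1 : Matrix V V ℝ) X = 0 → X = 0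

/-- Generic realisability of a multiset of eigenvalues for a graph. -/
def GenericallyRealisable {V : Type*} [Fintype V] [DecidableEq V]
    (G : SimpleGraph V) (σ : Multiset ℝ) : Prop :=
  ∀ Y : Finset (V → ℝ), (∀ y ∈ Y, y ≠ 0) →
    ∃ (d : V → ℝ) (U : Matrix V V ℝ),
      Multiset.map d Finset.univ.val = σ ∧ Uᵀ * U = 1 ∧
      inS G (U * Matrix.diagonal d * Uᵀ) ∧
      ∀ y ∈ Y, ∀ i, U.mulVec y i ≠ 0

/-- The partial join `(G₁, X) ∨ G₂`: the disjoint union of `G₁` and `G₂` together with all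
edges joining vertices of `X ⊆ V(G₁)` to vertices of `G₂`. -/
def partialJoin {α β : Type*} (G₁ : SimpleGraph α) (X : Set α) (G₂ : SimpleGraph β) :
    SimpleGraph (α ⊕ β) where
  Adj x y :=
    (∃ a b, G₁.Adj a b ∧ x = Sum.inl a ∧ y = Sum.inl b) ∨
    (∃ a b, G₂.Adj a b ∧ x = Sum.inr a ∧ y = Sum.inr b) ∨
    (∃ a ∈ X, ∃ b, x = Sum.inl a ∧ y = Sum.inr b) ∨
    (∃ a ∈ X, ∃ b, x = Sum.inr b ∧ y = Sum.inl a)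
  symm := by
    refine ⟨?_⟩
    rintro x y (⟨a, b, hab, rfl, rfl⟩ | ⟨a, b, hab, rfl, rfl⟩ | ⟨a, ha, b, rfl, rfl⟩ |
      ⟨a, ha, b, rfl, rfl⟩)
    · exact Or.inl ⟨b, a, hab.symm, rfl, rfl⟩
    · exact Or.inr (Or.inl ⟨b, a, hab.symm, rfl, rfl⟩)
    · exact Or.inr (Or.inr (Or.inr ⟨a, ha, b, rfl, rfl⟩))
    · exact Or.inr (Or.inr (Or.inl ⟨a, ha, b, rfl, rfl⟩))
  loopless := by
    refine ⟨?_⟩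
    rintro x (⟨a, b, hab, rfl, h⟩ | ⟨a, b, hab, rfl, h⟩ | ⟨a, ha, b, rfl, h⟩ | ⟨a, ha, b, rfl, h⟩)
    · cases h; exact hab.ne rfl
    · cases h; exact hab.ne rfl
    · exact (Sum.inl_ne_inr h).elim
    · exact (Sum.inr_ne_inl h).elim

/-- The join `G₁ ∨ G₂` of two graphs. -/
def graphJoin {α β : Type*} (G₁ : SimpleGraph α) (G₂ : SimpleGraph β) : SimpleGraph (α ⊕ β) :=
  partialJoin G₁ Set.univ G₂

/-- The disjoint union of a family of graphs. -/
def sigmaGraph {ι : Type*} {α : ι → Type*} (G : ∀ i, SimpleGraph (α i)) :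
    SimpleGraph (Σ i, α i) where
  Adj x y := ∃ (i : ι) (a b : α i), (G i).Adj a b ∧ x = ⟨i, a⟩ ∧ y = ⟨i, b⟩
  symm := by
    refine ⟨?_⟩
    rintro x y ⟨i, a, b, hab, rfl, rfl⟩
    exact ⟨i, b, a, hab.symm, rfl, rfl⟩
  loopless := by
    refine ⟨?_⟩
    rintro x ⟨i, a, b, hab, rfl, h⟩
    obtain rfl : a = b := by simpa using h
    exact hab.ne rfl

/-!
The `j`-th column `x` of `U` is an eigenvector of `A` for `λ_j`, and it tends to the `j`-th basis
vector because `λ_i * U i j - U i j * λ_j` is an entry of `(Λ - A) * U`, which tends to zero. For an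
edge `i w` of the path from `i` to `j`, the branch `B` of the forest that hangs at `i` away from
`w` is joined to its complement by the edge `i w` alone. On `B` the eigenvalue equation is therefore
the linear system `(λ_j - A_B) x_B = A i w * x w • e_i`. Its matrix tends to an invertible diagonal
matrix since `j ∉ B`, so `x i` is asymptotic to `A i w * x w / (λ_j - λ_i)`; iterating along the
path gives the product.
-/

open scoped Topology Asymptotics

section Graph

variable {V : Type*} {G : SimpleGraph V}

/-- The branch of `G` at `i` away from `w`: the vertices that remain connected to `i` once the edge
`i w` is removed. -/
def branch (G : SimpleGraph V) (i w : V) : Set V :=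
  {k | (G.deleteEdges {s(i, w)}).Reachable i k}

lemma self_mem_branch (i w : V) : i ∈ branch G i w :=
  SimpleGraph.Reachable.refl i

lemma notMem_branch_of_isAcyclic (hG : G.IsAcyclic) {i w : V} (h : G.Adj i w) :
    w ∉ branch G i w :=
  SimpleGraph.isBridge_iff.mp (SimpleGraph.isAcyclic_iff_forall_adj_isBridge.mp hG h)

lemma eq_and_eq_of_adj_of_notMem_branch {i w : V} (hw : w ∉ branch G i w) {k l : V}
    (hk : k ∈ branch G i w) (hl : l ∉ branch G i w) (hkl : G.Adj k l) : k = i ∧ l = w := by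
  have hedge : s(k, l) = s(i, w) := by
    by_contra hne
    exact hl (hk.trans (SimpleGraph.deleteEdges_adj.mpr ⟨hkl, hne⟩).reachable)
  rcases Sym2.eq_iff.mp hedge with hiw | ⟨rfl, -⟩
  · exact hiw
  · exact absurd hk hw

lemma end_notMem_branch_of_isPath_cons {i w j : V} (hw : w ∉ branch G i w) {h : G.Adj i w}
    {q : G.Walk w j} (hp : (SimpleGraph.Walk.cons h q).IsPath) : j ∉ branch G i w := by
  have hedge : s(i, w) ∉ q.edges := ((SimpleGraph.Walk.isTrail_cons _ _).mp hp.isTrail).2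
  exact fun hj => hw (hj.trans (q.toDeleteEdge _ hedge).reachable.symm)

/-- The product of the entries of a matrix along the steps of a walk, each edge being read in the
direction in which it is traversed. When the entry at an edge `e` is `t ^ f e`, this is the power
`t ^ s(i, j)` of the paper. -/
def walkWeight {R : Type*} [Monoid R] (A : Matrix V V R) {i j : V} (p : G.Walk i j) : R :=
  (p.darts.map fun d => A d.fst d.snd).prod

/-- The constant `c(i, j) = ∏ (λ_j - λ_k)⁻¹`, the product being over the vertices `k ≠ j` of a
path from `i` to `j`. -/
def pathCoeff [DecidableEq V] {𝕜 : Type*} [Field 𝕜] (lam : V → 𝕜) {i j : V} (p : G.Walk i j) : 𝕜 :=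
  ((p.support.filter fun k => decide (k ≠ j)).map fun k => (lam j - lam k)⁻¹).prod

lemma walkWeight_cons {R : Type*} [Monoid R] (A : Matrix V V R) {i w j : V} (h : G.Adj i w)
    (q : G.Walk w j) : walkWeight A (.cons h q) = A i w * walkWeight A q := by
  simp only [walkWeight, SimpleGraph.Walk.darts_cons, List.map_cons, List.prod_cons]

lemma walkWeight_ne_zero {R : Type*} [MonoidWithZero R] [NoZeroDivisors R] [Nontrivial R]
    {A : Matrix V V R} (hA : ∀ i j, G.Adj i j → A i j ≠ 0) {i j : V} (p : G.Walk i j) :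
    walkWeight A p ≠ 0 := by
  simp only [walkWeight, ne_eq, List.prod_eq_zero_iff, List.mem_map, not_exists, not_and]
  exact fun d _ => hA _ _ d.adj

lemma walkWeight_eq_pow {R : Type*} [Monoid R] {A : Matrix V V R} {t : R} {f : Sym2 V → ℕ}
    (hA : ∀ i j, G.Adj i j → A i j = t ^ f s(i, j)) {i j : V} (p : G.Walk i j) :
    walkWeight A p = t ^ (p.edges.map f).sum := by
  induction p with
  | nil => simp [walkWeight]
  | cons h q ih =>
    rw [walkWeight_cons, ih, hA _ _ h, SimpleGraph.Walk.edges_cons, List.map_cons, List.sum_cons,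
      pow_add]

lemma pathCoeff_cons [DecidableEq V] {𝕜 : Type*} [Field 𝕜] (lam : V → 𝕜) {i w j : V} (hij : i ≠ j)
    (h : G.Adj i w) (q : G.Walk w j) :
    pathCoeff lam (.cons h q) = (lam j - lam i)⁻¹ * pathCoeff lam q := by
  rw [pathCoeff, SimpleGraph.Walk.support_cons, List.filter_cons_of_pos (by simpa using hij),
    List.map_cons, List.prod_cons, pathCoeff]

end Graph

section LinearSystem

variable {V : Type*} [Fintype V] [DecidableEq V]

lemma submatrix_mulVec_eq_single {R : Type*} [CommRing R] {A : Matrix V V R} {μ : R} {x : V → R}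
    {B : Set V} [DecidablePred (· ∈ B)] (i : B) {w : V} (hw : w ∉ B)
    (hA : ∀ k ∈ B, ∀ l ∉ B, A k l ≠ 0 → k = i ∧ l = w) (hx : A *ᵥ x = μ • x) :
    (μ • 1 - A).submatrix ((↑) : B → V) ((↑) : B → V) *ᵥ (fun k => x k) =
      Pi.single i (A i w * x w) := by
  have hker : (μ • 1 - A) *ᵥ x = 0 := by
    rw [sub_mulVec, smul_mulVec, one_mulVec, hx, sub_self]
  ext k
  have hout (l : V) (hl : l ∉ B) : (μ • (1 : Matrix V V R) - A) k l = -A k l := by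
    have hkl : (k : V) ≠ l := fun h => hl (h ▸ k.2)
    simp [hkl]
  have hsum : ∑ l : {l // l ∉ B}, (μ • (1 : Matrix V V R) - A) k l * x l =
      -(Pi.single i (A i w * x w) : B → R) k := by
    rw [Fintype.sum_eq_single ⟨w, hw⟩, hout w hw, neg_mul, Pi.single_apply]
    · split_ifs with hki
      · rw [hki]
      · have : A k w = 0 := by
          by_contra hne
          exact hki (Subtype.ext (hA k k.2 w hw hne).1)
        rw [this, zero_mul]
    · rintro ⟨l, hl⟩ hlw
      have : A k l = 0 := by
        by_contra hne
        exact hlw (Subtype.ext (hA k k.2 l hl hne).2)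
      rw [hout l hl, this, neg_zero, zero_mul]
  have hrow := congrFun hker k
  rw [mulVec, dotProduct, ← Fintype.sum_subtype_add_sum_subtype (· ∈ B), hsum] at hrow
  exact add_neg_eq_zero.mp hrow

variable {ι 𝕜 : Type*} [NormedField 𝕜] {l : Filter ι}

lemma eventually_isUnit_det_of_tendsto {M : ι → Matrix V V 𝕜} {M₀ : Matrix V V 𝕜}
    (hM₀ : M₀.det ≠ 0) (hM : Tendsto M l (𝓝 M₀)) : ∀ᶠ n in l, IsUnit (M n).det := by
  have hdet := ((continuous_id.matrix_det (R := 𝕜)).tendsto M₀).comp hM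
  filter_upwards [hdet.eventually_ne hM₀] with n hn using hn.isUnit

lemma tendsto_matrix_inv {M : ι → Matrix V V 𝕜} {M₀ : Matrix V V 𝕜} (hM₀ : M₀.det ≠ 0)
    (hM : Tendsto M l (𝓝 M₀)) : Tendsto (fun n => (M n)⁻¹) l (𝓝 M₀⁻¹) := by
  refine (continuousAt_matrix_inv _ ?_).tendsto.comp hM
  simpa only [Ring.inverse_eq_inv'] using continuousAt_inv₀ hM₀

lemma isEquivalent_of_mulVec_eq_single {M : ι → Matrix V V 𝕜} {d : V → 𝕜} (hd : ∀ k, d k ≠ 0)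
    (hM : Tendsto M l (𝓝 (diagonal d))) {y : ι → V → 𝕜} {i : V} {b : ι → 𝕜}
    (hy : ∀ n, M n *ᵥ y n = Pi.single i (b n)) :
    (fun n => y n i) ~[l] fun n => (d i)⁻¹ * b n := by
  have hdet : (diagonal d).det ≠ 0 := by
    simpa only [det_diagonal] using Finset.prod_ne_zero_iff.mpr fun k _ => hd k
  have hinv : (diagonal d)⁻¹ i i = (d i)⁻¹ := by
    have : diagonal d * diagonal d⁻¹ = 1 := by simp [hd]
    rw [inv_eq_right_inv this, diagonal_apply_eq, Pi.inv_apply]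
  have hlim : Tendsto (fun n => (M n)⁻¹ i i) l (𝓝 (d i)⁻¹) :=
    hinv ▸ ((tendsto_matrix_inv hdet hM).apply_nhds i).apply_nhds i
  have hsolve : ∀ᶠ n in l, (M n)⁻¹ i i * b n = y n i := by
    filter_upwards [eventually_isUnit_det_of_tendsto hdet hM] with n hn
    have : y n = (M n)⁻¹ *ᵥ Pi.single i (b n) := by
      rw [← hy, mulVec_mulVec, nonsing_inv_mul _ hn, one_mulVec]
    simp [this, mul_comm]
  have hinv_equiv := (Asymptotics.isEquivalent_const_iff_tendsto (inv_ne_zero (hd i))).mpr hlim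
  exact (hinv_equiv.mul .refl).congr_left hsolve

end LinearSystem

section Eigenvector

variable {V ι 𝕜 : Type*} [Fintype V] [DecidableEq V] [NormedField 𝕜] {l : Filter ι}
  {G : SimpleGraph V} {A : ι → Matrix V V 𝕜} {lam : V → 𝕜} {μ : ι → 𝕜} {x : ι → V → 𝕜} {j : V}

lemma isEquivalent_eigenvector_of_adj (hG : G.IsAcyclic)
    (hlam : ∀ k, k ≠ j → lam k ≠ lam j) (hA : Tendsto A l (𝓝 (diagonal lam)))
    (hAG : ∀ n i k, i ≠ k → A n i k ≠ 0 → G.Adj i k)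
    (hμ : Tendsto μ l (𝓝 (lam j))) (hx : ∀ n, A n *ᵥ x n = μ n • x n)
    {i w : V} {h : G.Adj i w} {q : G.Walk w j} (hp : (SimpleGraph.Walk.cons h q).IsPath) :
    (fun n => x n i) ~[l] fun n => (lam j - lam i)⁻¹ * (A n i w * x n w) := by
  classical
  have hw := notMem_branch_of_isAcyclic hG h
  have hj := end_notMem_branch_of_isPath_cons hw hp
  have hcut (n : ι) : ∀ k ∈ branch G i w, ∀ v ∉ branch G i w, A n k v ≠ 0 → k = i ∧ v = w :=
    fun k hk v hv hkv => eq_and_eq_of_adj_of_notMem_branch hw hk hv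
      (hAG n k v (fun heq => hv (heq ▸ hk)) hkv)
  have hM : Tendsto (fun n => (μ n • 1 - A n).submatrix ((↑) : branch G i w → V)
      ((↑) : branch G i w → V)) l (𝓝 (diagonal fun k : branch G i w => lam j - lam k)) := by
    have hlim : Tendsto (fun n => μ n • 1 - A n) l (𝓝 (diagonal fun k => lam j - lam k)) := by
      simpa only [smul_one_eq_diagonal, diagonal_sub] using
        (hμ.smul_const (1 : Matrix V V 𝕜)).sub hA
    have hsub := (continuous_id.matrix_submatrix (R := 𝕜) ((↑) : branch G i w → V)
      ((↑) : branch G i w → V)).tendsto (diagonal fun k => lam j - lam k)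
    simpa [submatrix_diagonal _ _ Subtype.val_injective] using! hsub.comp hlim
  have hd (k : branch G i w) : lam j - lam k ≠ 0 :=
    sub_ne_zero.mpr (hlam k fun hkj => hj (hkj ▸ k.2)).symm
  exact isEquivalent_of_mulVec_eq_single hd hM
    fun n => submatrix_mulVec_eq_single ⟨i, self_mem_branch i w⟩ hw (hcut n) (hx n)

lemma isEquivalent_eigenvector_of_isPath (hG : G.IsAcyclic)
    (hlam : ∀ k, k ≠ j → lam k ≠ lam j) (hA : Tendsto A l (𝓝 (diagonal lam)))
    (hAG : ∀ n i k, i ≠ k → A n i k ≠ 0 → G.Adj i k)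
    (hμ : Tendsto μ l (𝓝 (lam j))) (hx : ∀ n, A n *ᵥ x n = μ n • x n)
    {i : V} {p : G.Walk i j} (hp : p.IsPath) :
    (fun n => x n i) ~[l] fun n => pathCoeff lam p * (walkWeight (A n) p * x n j) := by
  induction p with
  | nil => simpa [pathCoeff, walkWeight] using Asymptotics.IsEquivalent.refl
  | @cons i w j h q ih =>
    have hij : i ≠ j := by
      rintro rfl
      exact ((SimpleGraph.Walk.cons_isPath_iff _ _).mp hp).2 q.end_mem_support
    have htail := ih hlam hμ hp.of_cons
    refine (isEquivalent_eigenvector_of_adj hG hlam hA hAG hμ hx hp).trans ?_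
    refine ((Asymptotics.IsEquivalent.refl (u := fun n => (lam j - lam i)⁻¹ * A n i w)).mul
      htail).congr_left ?_ |>.congr_right ?_
    · exact .of_forall fun n => mul_assoc _ _ _
    · refine .of_forall fun n => ?_
      simp only [Pi.mul_apply, pathCoeff_cons lam hij, walkWeight_cons]
      ring

end Eigenvector

section Diagonalisation

variable {V ι : Type*} [Fintype V] [DecidableEq V] {l : Filter ι}

lemma tendsto_apply_zero_of_mul_eq_mul_diagonal {𝕜 : Type*} [NormedField 𝕜]
    {A U : ι → Matrix V V 𝕜} {lam : V → 𝕜} (hA : Tendsto A l (𝓝 (diagonal lam)))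
    (hU : ∀ i j, IsBoundedUnder (· ≤ ·) l fun n => ‖U n i j‖)
    (hAU : ∀ n, A n * U n = U n * diagonal lam) {i j : V} (hij : lam i ≠ lam j) :
    Tendsto (fun n => U n i j) l (𝓝 0) := by
  have hcomm (n : ι) : ((diagonal lam - A n) * U n) i j = (lam i - lam j) * U n i j := by
    rw [sub_mul, hAU, Matrix.sub_apply, diagonal_mul, mul_diagonal]
    ring
  have hdiff (k : V) : Tendsto (fun n => (diagonal lam - A n) i k) l (𝓝 0) := by
    simpa using ((hA.const_sub (diagonal lam)).apply_nhds i).apply_nhds k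
  have hprod : Tendsto (fun n => ((diagonal lam - A n) * U n) i j) l (𝓝 0) := by
    simpa only [mul_apply, Finset.sum_const_zero] using
      tendsto_finsetSum Finset.univ fun k _ => (hdiff k).zero_mul_isBoundedUnder_le (hU k j)
  simpa [hcomm, inv_mul_cancel_left₀ (sub_ne_zero.mpr hij)] using
    hprod.const_mul (lam i - lam j)⁻¹

lemma sum_sq_apply_eq_one {R : Type*} [Semiring R] {U : Matrix V V R} (hU : Uᵀ * U = 1) (j : V) :
    ∑ k, U k j ^ 2 = 1 := by
  simpa [mul_apply, sq] using congrFun (congrFun hU j) j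

lemma tendsto_diag_one_of_transpose_mul_self {U : ι → Matrix V V ℝ} {j : V}
    (hU : ∀ n, (U n)ᵀ * U n = 1) (hdiag : ∀ n, 0 ≤ U n j j)
    (hoff : ∀ i, i ≠ j → Tendsto (fun n => U n i j) l (𝓝 0)) :
    Tendsto (fun n => U n j j) l (𝓝 1) := by
  have hrest : Tendsto (fun n => ∑ k ∈ Finset.univ.erase j, U n k j ^ 2) l (𝓝 0) := by
    simpa using tendsto_finsetSum (Finset.univ.erase j) fun k hk =>
      (hoff k (Finset.ne_of_mem_erase hk)).pow 2
  have hsqrt : Tendsto (fun n => √(1 - ∑ k ∈ Finset.univ.erase j, U n k j ^ 2)) l (𝓝 1) := by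
    simpa using (hrest.const_sub 1).sqrt
  refine hsqrt.congr fun n => ?_
  rw [← sum_sq_apply_eq_one (hU n) j, ← Finset.add_sum_erase _ _ (Finset.mem_univ j),
    add_sub_cancel_right, Real.sqrt_sq (hdiag n)]

end Diagonalisation

theorem statement2_general {V ι : Type*} [Fintype V] [DecidableEq V] {l : Filter ι}
    {G : SimpleGraph V} (hG : G.IsAcyclic) {lam : V → ℝ} (hlam : Function.Injective lam)
    {A : ι → Matrix V V ℝ} (hAS : ∀ n, inS G (A n)) (hA : Tendsto A l (𝓝 (diagonal lam)))
    {U : ι → Matrix V V ℝ} (hUorth : ∀ n, (U n)ᵀ * U n = 1) (hUdiag : ∀ n i, 0 ≤ U n i i)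
    (hUA : ∀ n, (U n)ᵀ * A n * U n = diagonal lam) {i j : V} (p : G.Walk i j) (hp : p.IsPath) :
    Tendsto (fun n => U n i j / walkWeight (A n) p) l (𝓝 (pathCoeff lam p)) := by
  have hAU (n : ι) : A n * U n = U n * diagonal lam := by
    rw [← hUA n, ← mul_assoc, ← mul_assoc, mul_eq_one_comm.mp (hUorth n), one_mul]
  have hbdd (i j : V) : IsBoundedUnder (· ≤ ·) l fun n => ‖U n i j‖ :=
    isBoundedUnder_of ⟨1, fun n =>
      entry_norm_bound_of_unitary ((mem_orthogonalGroup_iff' V ℝ).mpr (hUorth n)) i j⟩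
  have hdiag : Tendsto (fun n => U n j j) l (𝓝 1) :=
    tendsto_diag_one_of_transpose_mul_self hUorth (hUdiag · j) fun i hij =>
      tendsto_apply_zero_of_mul_eq_mul_diagonal hA hbdd hAU (hlam.ne hij)
  have heigen (n : ι) : A n *ᵥ (fun k => U n k j) = lam j • fun k => U n k j := by
    ext i
    calc (A n * U n) i j = U n i j * lam j := by rw [hAU, mul_diagonal]
      _ = lam j * U n i j := mul_comm _ _
  have hequiv := isEquivalent_eigenvector_of_isPath hG (fun k hk => hlam.ne hk) hA
    (fun n i k hik => ((hAS n).2 i k hik).mp) tendsto_const_nhds heigen hp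
  have hweight (n : ι) : walkWeight (A n) p ≠ 0 :=
    walkWeight_ne_zero (fun i k hik => ((hAS n).2 i k hik.ne).mpr hik) p
  have hratio : (fun n => U n i j / walkWeight (A n) p) ~[l]
      fun n => pathCoeff lam p * U n j j := by
    refine (hequiv.div (.refl (u := fun n => walkWeight (A n) p))).congr_right ?_
    exact .of_forall fun n => by
      rw [Pi.div_apply, mul_left_comm, mul_div_cancel_left₀ _ (hweight n)]
  exact hratio.symm.tendsto_nhds (by simpa using hdiag.const_mul (pathCoeff lam p))

/-- Lemma 2.3: decay rates of the entries of the diagonalising orthogonal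
matrices, for a tree `G`. Here for vertices `i j` and the (unique) path `p` from `i` to `j`,
`s(i,j) = ∑_{e ∈ E(p)} f(e)` and `c(i,j) = ∏_{k ∈ V(p)∖{j}} (λ_j − λ_k)⁻¹`. -/
theorem statement2 (m : ℕ) (G : SimpleGraph (Fin m)) (hG : G.IsTree)
    (lam : Fin m → ℝ) (hlam : StrictMono lam)
    (g : Sym2 (Fin m) → ℕ) (N₀ : ℕ) (hN₀pos : 0 < N₀)
    (hN₀ : ∀ e ∈ G.edgeSet, ∀ i j : Fin m, g e * G.dist i j < N₀)
    (f : Sym2 (Fin m) → ℕ) (hf : ∀ e, f e = N₀ + g e)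
    (t : ℕ → ℝ) (ht : ∀ n, 0 < t n) (ht0 : Tendsto t atTop (nhds 0))
    (A : ℕ → Matrix (Fin m) (Fin m) ℝ)
    (hAS : ∀ n, inS G (A n))
    (hAedge : ∀ n, ∀ i j : Fin m, G.Adj i j → A n i j = t n ^ f s(i, j))
    (hAspec : ∀ n, specMultiset (A n) = Finset.univ.val.map lam)
    (hAtend : Tendsto A atTop (nhds (Matrix.diagonal lam)))
    (U : ℕ → Matrix (Fin m) (Fin m) ℝ)
    (hUorth : ∀ n, (U n)ᵀ * U n = 1)
    (hUdiag : ∀ n, ∀ i, 0 ≤ U n i i)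
    (hUA : ∀ n, (U n)ᵀ * A n * U n = Matrix.diagonal lam) :
    ∀ (i j : Fin m) (p : G.Walk i j), p.IsPath →
      Tendsto (fun n => U n i j / t n ^ ((p.edges.map f).sum)) atTop
        (nhds (((p.support.filter (fun k => decide (k ≠ j))).map
          (fun k => (lam j - lam k)⁻¹)).prod)) := by
  intro i j p hp
  simpa only [walkWeight_eq_pow (hAedge _) p, pathCoeff] using
    statement2_general hG.isAcyclic hlam.injective hAS hAtend hUorth hUdiag hUA p hp
end

section
/- Let G be a simple graph with connected components G₁,…,G_k, and let V be an r×k matrix with entries in {0,1} such that for each i ∈ {1,…,k} the i-th column of V sums to |G_i|. Then for each i and all real numbers λ₁ < λ₂ < … < λ_r, the multiset σ_i = {λ_j : V(j,i) = 1} is generically realisable for G_i. In other words, every 0-1 multiplicity matrix which fits G is generically realisable for G. -/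
open Matrix Filter

/-!
The heart of the matter is a perturbation of `D = diag(d)`, whose diagonal entries are distinct. By
the inverse function theorem every small symmetric `B` with zero diagonal is the off-diagonal part
of `U D Uᵀ` for an orthogonal `U = U(B)` that depends analytically on `B`, with `U(0) = 1`. Taking
`B` to be a weighted adjacency matrix of `G` gives an analytic family, indexed by edge weights `w`,
of orthogonal matrices with `U D Uᵀ ∈ S(G)` as soon as all weights are nonzero.

Each coordinate `(U(w) y)ᵢ` with `y ≠ 0` is an analytic germ at `w = 0`, and it is not zero: put
nonzero weights exactly on a path from `i` that meets the support of `y` only in its last vertex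
`j`. The vertices off the path are then isolated, so that `(U y)ᵢ = Uᵢⱼ yⱼ`, and `Uᵢⱼ ≠ 0` because
an eigenvector of a Jacobi matrix that vanishes at one end vanishes along the path, whereas `Uⱼⱼ`
is close to `1`. Finitely many nonzero analytic germs at a point are simultaneously nonzero
somewhere arbitrarily close to it.
-/

open Topology

section Analytic

variable {𝕜 E F : Type*} [NontriviallyNormedField 𝕜] [NormedAddCommGroup E] [NormedSpace 𝕜 E]
  [NormedAddCommGroup F] [NormedSpace 𝕜 F] [CompleteSpace F] [LocallyConnectedSpace E] {z : E}

lemma eventually_frequently_ne_zero_of_analyticAt {f : E → F} (hf : AnalyticAt 𝕜 f z)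
    (hne : ∃ᶠ w in 𝓝 z, f w ≠ 0) : ∀ᶠ w in 𝓝 z, ∃ᶠ x in 𝓝 w, f x ≠ 0 := by
  obtain ⟨W, ⟨hW, hzW, hWconn⟩, hWf⟩ :=
    (LocallyConnectedSpace.open_connected_basis z).mem_iff.1 hf.eventually_analyticAt
  filter_upwards [hW.mem_nhds hzW] with w hw hfw
  simp only [not_not] at hfw
  have hzero : Set.EqOn f 0 W := AnalyticOnNhd.eqOn_zero_of_preconnected_of_eventuallyEq_zero
    (fun x hx => hWf hx) hWconn.isPreconnected hw hfw
  exact hne (Filter.mem_of_superset (hW.mem_nhds hzW) fun x hx => not_not.2 (hzero hx))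

lemma frequently_forall_ne_zero_of_analyticAt {ι : Type*} [Finite ι] {f : ι → E → F}
    (hf : ∀ i, AnalyticAt 𝕜 (f i) z) (hne : ∀ i, ∃ᶠ w in 𝓝 z, f i w ≠ 0) :
    ∃ᶠ w in 𝓝 z, ∀ i, f i w ≠ 0 := by
  classical
  cases nonempty_fintype ι
  suffices ∀ s : Finset ι, ∃ᶠ w in 𝓝 z, ∀ i ∈ s, f i w ≠ 0 by simpa using this Finset.univ
  intro s
  induction s using Finset.induction_on with
  | empty => simp
  | insert i s _ ih =>
    have hcont : ∀ᶠ w in 𝓝 z, ∀ j, ContinuousAt (f j) w :=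
      eventually_all.2 fun j => (hf j).eventually_analyticAt.mono fun _ h => h.continuousAt
    have hi := eventually_frequently_ne_zero_of_analyticAt (hf i) (hne i)
    rw [← frequently_frequently_nhds]
    refine (ih.and_eventually (hcont.and hi)).mono fun w ⟨hs, hcw, hiw⟩ => ?_
    have hs' : ∀ᶠ x in 𝓝 w, ∀ j ∈ s, f j x ≠ 0 :=
      s.eventually_all.2 fun j hj => (hcw j).eventually_ne (hs j hj)
    exact (hiw.and_eventually hs').mono fun x ⟨hix, hsx⟩ =>
      Finset.forall_mem_insert _ _ _ |>.2 ⟨hix, hsx⟩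

end Analytic

lemma exists_analyticAt_right_inverse {𝕂 E : Type*} [RCLike 𝕂] [NormedAddCommGroup E]
    [NormedSpace 𝕂 E] [FiniteDimensional 𝕂 E] {f : E → E} {a : E} (hf : AnalyticAt 𝕂 f a)
    (hinj : Function.Injective (fderiv 𝕂 f a)) :
    ∃ g : E → E, AnalyticAt 𝕂 g (f a) ∧ g (f a) = a ∧ ∀ᶠ x in 𝓝 (f a), f (g x) = x := by
  have : CompleteSpace E := FiniteDimensional.complete 𝕂 E
  let e : E ≃L[𝕂] E :=
    (LinearEquiv.ofInjectiveEndo (fderiv 𝕂 f a : E →ₗ[𝕂] E) hinj).toContinuousLinearEquiv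
  have hderiv : HasFDerivAt f (e : E →L[𝕂] E) a := by
    have he : (e : E →L[𝕂] E) = fderiv 𝕂 f a := by ext; rfl
    exact he ▸ hf.differentiableAt.hasFDerivAt
  have hsmooth : ContDiffAt 𝕂 ⊤ f a := hf.contDiffAt
  exact ⟨hsmooth.localInverse hderiv (by simp), (hsmooth.to_localInverse hderiv _).analyticAt,
    hsmooth.localInverse_apply_image hderiv _,
    (hsmooth.hasStrictFDerivAt' hderiv (by simp)).eventually_right_inverse⟩

section Isospectral

open scoped Matrix.Norms.Operator

lemma lie_diagonal_apply {V R : Type*} [Fintype V] [DecidableEq V] [CommRing R] (d : V → R)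
    (M : Matrix V V R) (a b : V) : ⁅diagonal d, M⁆ a b = (d a - d b) * M a b := by
  rw [Ring.lie_def, Matrix.sub_apply, diagonal_mul, mul_diagonal, sub_mul, mul_comm (M a b)]

lemma isSymm_mul_mul_transpose {m n R : Type*} [Fintype n] [NonUnitalCommSemiring R]
    {A : Matrix n n R} (hA : A.IsSymm) (U : Matrix m n R) : (U * A * Uᵀ).IsSymm := by
  rw [Matrix.IsSymm, transpose_mul, transpose_mul, transpose_transpose, hA.eq, Matrix.mul_assoc]

variable {V : Type*} [Fintype V] [DecidableEq V] {d : V → ℝ}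

/-- For symmetric `D`, the symmetric part `U * Uᵀ` of this matrix detects whether `U` is orthogonal,
while its skew part `⁅D, U * D * Uᵀ⁆` records, for diagonal `D` with distinct entries, the
off-diagonal entries of `U * D * Uᵀ`. It thus turns the search for an orthogonal `U` with prescribed
off-diagonal part of `U * D * Uᵀ` into one equation to which the inverse function theorem applies
at `U = 1`. -/
def isospectralMap (D U : Matrix V V ℝ) : Matrix V V ℝ := U * Uᵀ + ⁅D, U * D * Uᵀ⁆

lemma isospectralMap_one (D : Matrix V V ℝ) : isospectralMap D 1 = 1 := by
  simp [isospectralMap, Ring.lie_def]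

omit [DecidableEq V] in
lemma analyticAt_isospectralMap (D U : Matrix V V ℝ) : AnalyticAt ℝ (isospectralMap D) U := by
  classical
  have hT : AnalyticAt ℝ (transpose : Matrix V V ℝ → Matrix V V ℝ) U :=
    (transposeLinearEquiv V V ℝ ℝ).toLinearMap.toContinuousLinearMap.analyticAt U
  unfold isospectralMap
  simp only [Ring.lie_def]
  fun_prop

lemma fderiv_isospectralMap_one (D H : Matrix V V ℝ) :
    fderiv ℝ (isospectralMap D) 1 H = H + Hᵀ + ⁅D, H * D + D * Hᵀ⁆ := by
  let T := (transposeLinearEquiv V V ℝ ℝ).toLinearMap.toContinuousLinearMap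
  have hid := hasFDerivAt_id (𝕜 := ℝ) (1 : Matrix V V ℝ)
  have hT : HasFDerivAt transpose T 1 := T.hasFDerivAt
  have hconj := (hid.mul_const' D).mul' hT
  have hmap : HasFDerivAt (isospectralMap D) _ 1 :=
    (hid.mul' hT).add ((hconj.const_mul D).sub (hconj.mul_const' D))
  rw [hmap.fderiv]
  change 1 * Hᵀ + H * 1ᵀ + (D * (1 * D * Hᵀ + H * D * 1ᵀ) - (1 * D * Hᵀ + H * D * 1ᵀ) * D) = _
  simp only [Ring.lie_def, transpose_one, Matrix.one_mul, Matrix.mul_one, add_comm]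

lemma fderiv_isospectralMap_diagonal_injective (hd : Function.Injective d) :
    Function.Injective (fderiv ℝ (isospectralMap (diagonal d)) 1) := by
  refine (injective_iff_map_eq_zero _).2 fun H hH => ?_
  rw [fderiv_isospectralMap_one] at hH
  have hentry (a b : V) :
      H a b + H b a + (d a - d b) * (H a b * d b + d a * H b a) = 0 := by
    simpa [lie_diagonal_apply, mul_diagonal, diagonal_mul] using congrFun₂ hH a b
  have hskew (a b : V) : H b a = -H a b := by linarith [hentry a b, hentry b a]
  ext a b
  rcases eq_or_ne a b with rfl | hab
  · simpa using self_eq_neg.1 (hskew a a)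
  · have hsq : (d a - d b) ^ 2 * H a b = 0 := by
      have := hentry a b
      rw [hskew a b] at this
      linear_combination -this
    simpa [sub_eq_zero, hd.ne hab] using hsq

lemma orthogonal_of_isospectralMap_eq (hd : Function.Injective d) {U B : Matrix V V ℝ}
    (hB : B.IsSymm) (h : isospectralMap (diagonal d) U = 1 + ⁅diagonal d, B⁆) :
    Uᵀ * U = 1 ∧ ∀ a b, a ≠ b → (U * diagonal d * Uᵀ) a b = B a b := by
  set M := U * diagonal d * Uᵀ
  have hMsymm : M.IsSymm := isSymm_mul_mul_transpose (isSymm_diagonal d) U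
  have hentry (a b : V) : (U * Uᵀ) a b + (d a - d b) * M a b =
      (1 : Matrix V V ℝ) a b + (d a - d b) * B a b := by
    simpa [isospectralMap, lie_diagonal_apply] using congrFun₂ h a b
  have horth : U * Uᵀ = 1 := by
    ext a b
    have hba := hentry b a
    rw [(isSymm_mul_transpose_self U).apply a b, isSymm_one.apply a b, hMsymm.apply a b,
      hB.apply a b] at hba
    linear_combination (hentry a b + hba) / 2
  refine ⟨mul_eq_one_comm.1 horth, fun a b hab => ?_⟩
  have := hentry a b
  rw [horth] at this
  exact mul_left_cancel₀ (sub_ne_zero.2 (hd.ne hab)) (add_left_cancel this)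

lemma exists_analyticAt_isospectral_family (hd : Function.Injective d) :
    ∃ U : Matrix V V ℝ → Matrix V V ℝ, AnalyticAt ℝ U 0 ∧ U 0 = 1 ∧
      ∀ᶠ B in 𝓝 0, B.IsSymm → (U B)ᵀ * U B = 1 ∧
        ∀ a b, a ≠ b → (U B * diagonal d * (U B)ᵀ) a b = B a b := by
  obtain ⟨g, hg, hg1, hright⟩ := exists_analyticAt_right_inverse
    (analyticAt_isospectralMap (diagonal d) 1) (fderiv_isospectralMap_diagonal_injective hd)
  rw [isospectralMap_one] at hg hg1 hright
  let shift (B : Matrix V V ℝ) : Matrix V V ℝ := 1 + ⁅diagonal d, B⁆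
  have hshift0 : shift 0 = 1 := by simp [shift, Ring.lie_def]
  have hshift : AnalyticAt ℝ shift 0 := by
    simp only [shift, Ring.lie_def]
    fun_prop
  refine ⟨g ∘ shift, hg.comp_of_eq hshift hshift0, by simp [hshift0, hg1], ?_⟩
  have htendsto : Tendsto shift (𝓝 0) (𝓝 1) := hshift0 ▸ hshift.continuousAt.tendsto
  filter_upwards [htendsto.eventually hright] with B hgB hB
  exact orthogonal_of_isospectralMap_eq hd hB hgB

end Isospectral

section Path

variable {V : Type*} {G : SimpleGraph V} {i j : V}

lemma exists_isPath_meeting_only_at_end (hG : G.Preconnected) {S : Set V}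
    (hS : S.Nonempty) (i : V) :
    ∃ j ∈ S, ∃ p : G.Walk i j, p.IsPath ∧ ∀ c ∈ p.support, c ∈ S → c = j := by
  classical
  obtain ⟨s, hs⟩ := hS
  obtain ⟨q⟩ := hG i s
  induction q with
  | nil => exact ⟨_, hs, .nil, .nil, by simp⟩
  | @cons u v w huv _ ih =>
    by_cases hu : u ∈ S
    · exact ⟨u, hu, .nil, .nil, by simp⟩
    · obtain ⟨j, hj, p, -, hpS⟩ := ih hs
      refine ⟨j, hj, (p.cons huv).bypass, (p.cons huv).bypass_isPath, fun c hc hcS => ?_⟩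
      rcases List.mem_cons.1 ((p.cons huv).support_bypass_subset_support hc) with rfl | hc
      · exact absurd hcS hu
      · exact hpS c hc hcS

-- `hoff` asks for `A a b * x b = 0` instead of `A a b = 0` so that it survives deleting the first
-- edge `s(u, v)` of the path, where `A v u ≠ 0` but `x u = 0`.
lemma eigenvector_apply_eq_zero_of_path {K : Type*} [Field K] [Fintype V]
    {A : Matrix V V K} {μ : K} {x : V → K} (hx : A *ᵥ x = μ • x) {p : G.Walk i j} (hp : p.IsPath)
    (hedge : ∀ a b, s(a, b) ∈ p.edges → A a b ≠ 0)
    (hoff : ∀ a ∈ p.support, ∀ b, a ≠ b → s(a, b) ∉ p.edges → A a b * x b = 0)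
    (hxi : x i = 0) : x j = 0 := by
  induction p with
  | nil => exact hxi
  | @cons u v w huv p ih =>
    obtain ⟨hp, hu⟩ := (SimpleGraph.Walk.cons_isPath_iff huv p).1 hp
    have hxv : x v = 0 := by
      have hrow : ∑ b, A u b * x b = 0 := (congrFun hx u).trans (by simp [hxi])
      rw [Finset.sum_eq_single v] at hrow
      · exact (mul_eq_zero.1 hrow).resolve_left (hedge u v (by simp))
      · intro b _ hbv
        rcases eq_or_ne u b with rfl | hub
        · rw [hxi, mul_zero]
        · refine hoff u (by simp) b hub fun hmem => ?_
          rcases List.mem_cons.1 hmem with h | h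
          · exact hbv (Sym2.congr_right.1 h)
          · exact hu (p.fst_mem_support_of_mem_edges h)
      · simp
    refine ih hp (fun a b h => hedge a b (List.mem_cons_of_mem _ h)) (fun a ha b hab hmem => ?_) hxv
    by_cases h : s(a, b) = s(u, v)
    · rcases Sym2.eq_iff.1 h with ⟨rfl, -⟩ | ⟨-, rfl⟩
      · exact absurd ha hu
      · rw [hxi, mul_zero]
    · exact hoff a (List.mem_cons_of_mem _ ha) b hab (by simp [h, hmem])

variable [Fintype V] [DecidableEq V] {K : Type*} [Field K] {U : Matrix V V K} {d : V → K}

lemma orthogonal_apply_eq_zero_of_isolated (hd : Function.Injective d) (hU : Uᵀ * U = 1)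
    {c : V} (hc : U c c ≠ 0) (hA : ∀ b, b ≠ c → (U * diagonal d * Uᵀ) c b = 0)
    (i : V) (hic : i ≠ c) : U i c = 0 := by
  set A := U * diagonal d * Uᵀ with hAdef
  have hAU : A * U = U * diagonal d := by rw [hAdef, Matrix.mul_assoc, hU, Matrix.mul_one]
  have hrow (b : V) : A c c * U c b = U c b * d b := by
    rw [← mul_diagonal, ← hAU, Matrix.mul_apply, Finset.sum_eq_single c]
    · intro a _ hac
      rw [hA a hac, zero_mul]
    · simp
  have hAcc : A c c = d c := mul_right_cancel₀ hc ((hrow c).trans (mul_comm _ _))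
  have hUc (b : V) (hb : b ≠ c) : U c b = 0 := by
    have := hrow b
    rw [hAcc, mul_comm (U c b)] at this
    by_contra h
    exact hb (hd (mul_right_cancel₀ h this)).symm
  have horth : (U * Uᵀ) i c = 0 := by rw [mul_eq_one_comm.1 hU, one_apply_ne hic]
  rw [Matrix.mul_apply, Finset.sum_eq_single c] at horth
  · exact (mul_eq_zero.1 horth).resolve_right hc
  · intro b _ hbc
    rw [transpose_apply, hUc b hbc, mul_zero]
  · simp

lemma mulVec_apply_ne_zero_of_path (hd : Function.Injective d) (hU : Uᵀ * U = 1)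
    (hdiag : ∀ c, U c c ≠ 0) {p : G.Walk i j} (hp : p.IsPath)
    (hA : ∀ a b, a ≠ b → ((U * diagonal d * Uᵀ) a b ≠ 0 ↔ s(a, b) ∈ p.edges)) {y : V → K}
    (hyj : y j ≠ 0) (hy : ∀ c ∈ p.support, y c ≠ 0 → c = j) : (U *ᵥ y) i ≠ 0 := by
  have hAU : U * diagonal d * Uᵀ * U = U * diagonal d := by
    rw [Matrix.mul_assoc, hU, Matrix.mul_one]
  have heigen : (U * diagonal d * Uᵀ) *ᵥ U.col j = d j • U.col j := by
    ext a
    exact (congrFun₂ hAU a j).trans (by simp [mul_comm])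
  have hUij : U i j ≠ 0 := fun h => hdiag j <|
    eigenvector_apply_eq_zero_of_path (x := U.col j) heigen hp
      (fun a b hab => (hA a b (p.adj_of_mem_edges hab).ne).2 hab)
      (fun a _ b hab hmem => by rw [not_not.1 (mt (hA a b hab).1 hmem), zero_mul]) h
  have houtside (c : V) (hc : c ∉ p.support) : U i c = 0 :=
    orthogonal_apply_eq_zero_of_isolated hd hU (hdiag c)
      (fun b hb => not_not.1 <| mt (hA c b hb.symm).1 fun h =>
        hc (p.fst_mem_support_of_mem_edges h))
      i fun h => hc (h ▸ p.start_mem_support)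
  have hsum : (U *ᵥ y) i = U i j * y j := by
    refine Finset.sum_eq_single j (fun c _ hcj => ?_) (by simp)
    by_cases hc : c ∈ p.support
    · rw [not_not.1 (mt (hy c hc) hcj), mul_zero]
    · exact mul_eq_zero_of_left (houtside c hc) _
  rw [hsum]
  exact mul_ne_zero hUij hyj

end Path

section WeightMatrix

variable {V R : Type*} [Semiring R] (G : SimpleGraph V)

/-- The weighted adjacency matrix of `G`. Weights are assigned to all unordered pairs and those of
non-edges are ignored, which makes the dependence on the weights a linear map on a space of
functions that does not involve `G`. -/
noncomputable def weightMatrix : (Sym2 V → R) →ₗ[R] Matrix V V R where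
  toFun w := of fun a b => G.edgeSet.indicator w s(a, b)
  map_add' w w' := by ext a b; exact congrFun (Set.indicator_add' G.edgeSet w w') s(a, b)
  map_smul' c w := by ext a b; exact Set.indicator_const_smul_apply G.edgeSet c w s(a, b)

lemma weightMatrix_apply (w : Sym2 V → R) (a b : V) :
    weightMatrix G w a b = G.edgeSet.indicator w s(a, b) := rfl

lemma isSymm_weightMatrix (w : Sym2 V → R) : (weightMatrix G w).IsSymm :=
  IsSymm.ext fun a b => by simp only [weightMatrix_apply, Sym2.eq_swap]

lemma weightMatrix_apply_ne_zero {w : Sym2 V → R} {a b : V} :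
    weightMatrix G w a b ≠ 0 ↔ G.Adj a b ∧ w s(a, b) ≠ 0 := by
  simp [weightMatrix_apply, Set.indicator_apply_eq_zero]

end WeightMatrix

lemma tendsto_smul_const_punctured_nhds_zero (𝕜 : Type*) {E : Type*} [Zero 𝕜] [TopologicalSpace 𝕜]
    [Zero E] [TopologicalSpace E] [SMulWithZero 𝕜 E] [ContinuousSMul 𝕜 E] (w : E) :
    Tendsto (fun t : 𝕜 => t • w) (𝓝[≠] 0) (𝓝 0) :=
  (Continuous.tendsto' (by fun_prop) 0 0 (zero_smul 𝕜 w)).mono_left nhdsWithin_le_nhds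

section IsospectralWeights

open scoped Matrix.Norms.Operator

variable {V : Type*} [Fintype V] [DecidableEq V] {G : SimpleGraph V} {d : V → ℝ}

lemma exists_analyticAt_isospectral_weights (G : SimpleGraph V) (hd : Function.Injective d) :
    ∃ U : (Sym2 V → ℝ) → Matrix V V ℝ, AnalyticAt ℝ U 0 ∧ U 0 = 1 ∧
      ∀ᶠ w in 𝓝 0, (U w)ᵀ * U w = 1 ∧
        ∀ a b, a ≠ b → ((U w * diagonal d * (U w)ᵀ) a b ≠ 0 ↔ G.Adj a b ∧ w s(a, b) ≠ 0) := by
  obtain ⟨U, hU, hU1, hev⟩ := exists_analyticAt_isospectral_family hd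
  let B := (weightMatrix (R := ℝ) G).toContinuousLinearMap
  have hB0 : B 0 = 0 := map_zero B
  refine ⟨U ∘ B, hU.comp_of_eq (B.analyticAt 0) hB0, by simp [hU1], ?_⟩
  filter_upwards [(B.continuous.tendsto' 0 0 hB0).eventually hev] with w hw
  obtain ⟨horth, hoff⟩ := hw (isSymm_weightMatrix G w)
  refine ⟨horth, fun a b hab => ?_⟩
  have hentry : ((U ∘ B) w * diagonal d * ((U ∘ B) w)ᵀ) a b = weightMatrix G w a b := hoff a b hab
  rw [hentry, weightMatrix_apply_ne_zero]

lemma frequently_mulVec_apply_ne_zero (hG : G.Preconnected) (hd : Function.Injective d)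
    {U : (Sym2 V → ℝ) → Matrix V V ℝ} (hU : ContinuousAt U 0) (hU1 : U 0 = 1)
    (hev : ∀ᶠ w in 𝓝 0, (U w)ᵀ * U w = 1 ∧
      ∀ a b, a ≠ b → ((U w * diagonal d * (U w)ᵀ) a b ≠ 0 ↔ G.Adj a b ∧ w s(a, b) ≠ 0))
    {y : V → ℝ} (hy : y ≠ 0) (i : V) : ∃ᶠ w in 𝓝 0, (U w *ᵥ y) i ≠ 0 := by
  obtain ⟨j, hj, p, hp, hpy⟩ :=
    exists_isPath_meeting_only_at_end hG (Function.ne_iff.1 hy) i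
  have hdiag : ∀ᶠ w in 𝓝 0, ∀ c, U w c c ≠ 0 := eventually_all.2 fun c =>
    ((continuous_id.matrix_elem c c).continuousAt.comp hU).eventually_ne (by simp [hU1])
  let w (t : ℝ) : Sym2 V → ℝ := t • Set.indicator {e | e ∈ p.edges} 1
  have hw : Tendsto w (𝓝[≠] 0) (𝓝 0) := tendsto_smul_const_punctured_nhds_zero ℝ _
  have hwne {t : ℝ} (ht : t ≠ 0) (a b : V) :
      G.Adj a b ∧ w t s(a, b) ≠ 0 ↔ s(a, b) ∈ p.edges := by
    simpa [w, ht] using fun h => p.adj_of_mem_edges h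
  refine hw.frequently (Eventually.frequently ?_)
  filter_upwards [hw.eventually hev, hw.eventually hdiag, self_mem_nhdsWithin]
    with t ⟨horth, hoff⟩ hdiag ht
  exact mulVec_apply_ne_zero_of_path hd horth hdiag hp
    (fun a b hab => (hoff a b hab).trans (hwne ht a b)) hj hpy

lemma exists_orthogonal_inS_mulVec_ne_zero (hG : G.Preconnected) (hd : Function.Injective d)
    (Y : Finset (V → ℝ)) (hY : ∀ y ∈ Y, y ≠ 0) :
    ∃ U : Matrix V V ℝ, Uᵀ * U = 1 ∧ inS G (U * diagonal d * Uᵀ) ∧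
      ∀ y ∈ Y, ∀ i, (U *ᵥ y) i ≠ 0 := by
  obtain ⟨U, hU, hU1, hev⟩ := exists_analyticAt_isospectral_weights G hd
  let f : Sym2 V ⊕ Y × V → (Sym2 V → ℝ) → ℝ :=
    Sum.elim (fun e w => w e) (fun q w => (U w *ᵥ q.1) q.2)
  have hf : ∀ k, AnalyticAt ℝ (f k) 0 := by
    rintro (e | ⟨y, i⟩)
    · exact (ContinuousLinearMap.proj (R := ℝ) (φ := fun _ : Sym2 V => ℝ) e).analyticAt 0
    · let L := (LinearMap.proj i ∘ₗ (mulVecBilin ℝ ℝ).flip (y : V → ℝ)).toContinuousLinearMap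
      exact (L.analyticAt (U 0)).comp hU
  have hfne : ∀ k, ∃ᶠ w in 𝓝 0, f k w ≠ 0 := by
    rintro (e | ⟨y, i⟩)
    · refine (tendsto_smul_const_punctured_nhds_zero ℝ (1 : Sym2 V → ℝ)).frequently
        (Eventually.frequently ?_)
      filter_upwards [self_mem_nhdsWithin] with t ht
      simpa [f] using ht
    · exact frequently_mulVec_apply_ne_zero hG hd hU.continuousAt hU1 hev (hY y y.2) i
  obtain ⟨w, hne, horth, hoff⟩ :=
    ((frequently_forall_ne_zero_of_analyticAt hf hfne).and_eventually hev).exists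
  refine ⟨U w, horth, ⟨isSymm_mul_mul_transpose (isSymm_diagonal d) _, fun a b hab => ?_⟩,
    fun y hy i => hne (.inr (⟨y, hy⟩, i))⟩
  exact (hoff a b hab).trans (and_iff_left (hne (.inl s(a, b))))

end IsospectralWeights

lemma exists_map_univ_eq_of_card_eq {V α : Type*} [Fintype V] {σ : Multiset α}
    (hσ : σ.card = Fintype.card V) : ∃ d : V → α, Finset.univ.val.map d = σ := by
  classical
  let e : V ≃ σ := Fintype.equivOfCardEq (by simp [hσ])
  refine ⟨fun v => (e v).1, (Multiset.map_map (fun x : σ => x.1) e _).symm.trans ?_⟩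
  rw [Multiset.map_univ_val_equiv, Multiset.map_univ_coe]

lemma card_filter_eq_one {ι : Type*} [Fintype ι] {f : ι → ℕ} (hf : ∀ j, f j = 0 ∨ f j = 1) :
    (Finset.univ.filter fun j => f j = 1).card = ∑ j, f j := by
  rw [Finset.card_filter]
  exact Finset.sum_congr rfl fun j _ => by rcases hf j with h | h <;> simp [h]

theorem statement4_general {V : Type*} [Fintype V] [DecidableEq V] {G : SimpleGraph V}
    (hG : G.Preconnected) {σ : Multiset ℝ} (hσ : σ.Nodup) (hcard : σ.card = Fintype.card V) :
    GenericallyRealisable G σ := by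
  intro Y hY
  obtain ⟨d, rfl⟩ := exists_map_univ_eq_of_card_eq hcard
  have hd : Function.Injective d := fun a b =>
    Multiset.inj_on_of_nodup_map hσ a (Finset.mem_univ a) b (Finset.mem_univ b)
  obtain ⟨U, hU⟩ := exists_orthogonal_inS_mulVec_ne_zero hG hd Y hY
  exact ⟨d, U, rfl, hU⟩

/-- Theorem 2.5: every 0-1 multiplicity matrix which fits a graph `G`
(with connected components `G i` on `m i` vertices) is generically realisable for `G`,
i.e. each column gives a generically realisable multiset for the corresponding component. -/
theorem statement4 (k r : ℕ) (m : Fin k → ℕ) (G : ∀ i, SimpleGraph (Fin (m i)))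
    (hG : ∀ i, (G i).Connected)
    (V : Fin r → Fin k → ℕ)
    (hV01 : ∀ j i, V j i = 0 ∨ V j i = 1)
    (hfit : ∀ i, (∑ j, V j i) = m i) :
    ∀ (i : Fin k) (lam : Fin r → ℝ), StrictMono lam →
      GenericallyRealisable (G i)
        (((Finset.univ.filter (fun j => V j i = 1)).val).map lam) :=
  fun i _ hlam => statement4_general (hG i).preconnected
    ((Finset.nodup _).map hlam.injective)
    (by rw [Multiset.card_map, Finset.card_val, card_filter_eq_one (hV01 · i), hfit,
      Fintype.card_fin])
end

section
/- Let G and H be simple graphs with connected components G₁,…,G_k and H₁,…,H_ℓ respectively. Suppose there exist r ≥ 3 and matrices V ∈ {0,1}^{r×k} and W ∈ {0,1}^{r×ℓ} such that: the i-th column of V sums to |G_i| for each i, the j-th column of W sums to |H_j| for each j, and V and W are compatible. Then q(G ∨ H) = 2. -/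
open Matrix Filter

/-- The interior rows of an `r`-row matrix: all rows except the first and the last. -/
def interiorRows (r : ℕ) : Finset (Fin r) :=
  Finset.univ.filter (fun j => j.val ≠ 0 ∧ j.val ≠ r - 1)

/-- Compatibility of two nonnegative integer matrices `V ∈ ℕ₀^{r×k}`, `W ∈ ℕ₀^{r×l}`
(for `r ≥ 3`): the interior row sums agree, and `ṼᵀW̃` is nowhere-zero. -/
def Compatible {r k l : ℕ} (V : Fin r → Fin k → ℕ) (W : Fin r → Fin l → ℕ) : Prop :=
  (∀ j ∈ interiorRows r, (∑ i, V j i) = ∑ i, W j i) ∧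
  (∀ a : Fin k, ∀ b : Fin l, (∑ j ∈ interiorRows r, V j a * W j b) ≠ 0)

/-- `col : Fin r → ℕ` is an ordered multiplicity list realised by a matrix in `S(G)`:
there are `λ₁ < … < λ_r` and `A ∈ S(G)` whose spectrum consists of each `λ_j` with
multiplicity `col j`. -/
def IsOrderedMultiplicityList {α : Type*} [Fintype α] [DecidableEq α]
    (G : SimpleGraph α) {r : ℕ} (col : Fin r → ℕ) : Prop :=
  ∃ lam : Fin r → ℝ, StrictMono lam ∧ ∃ A : Matrix α α ℝ, inS G A ∧
    specMultiset A =
      (Finset.univ.val : Multiset (Fin r)).bind (fun j => Multiset.replicate (col j) (lam j))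

/-!
Diagonalise `A = U D Uᵀ ∈ S(G)` and `C = U' D' U'ᵀ ∈ S(H)` orthogonally and put `B = U Z U'ᵀ`. The
symmetric matrix with blocks `A, B, Bᵀ, C` squares to `1` as soon as `Z Zᵀ = 1 - D²`,
`Zᵀ Z = 1 - D'²` and `D Z + Z D' = 0`. After an affine change of the eigenvalues the extreme ones
are `±1` and contribute nothing to `1 - D²`, while by compatibility every interior eigenvalue has
the same total multiplicity in `A` and in `-C`. Hence `Z` can be assembled from multiples of
nowhere-zero orthogonal matrices matching the interior eigenspaces of `A` with those of `-C`, and no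
block of `Z` between a component of `G` and one of `H` vanishes.

That `B` is nowhere zero is then a genericity statement about `U` and `U'`. For a connected graph
and distinct eigenvalues, the inverse function theorem gives an orthogonal `u S`, analytic in the
small prescribed off-diagonal part `S` of `u S * D * (u S)ᵀ`, so it suffices that no entry
`(u S *ᵥ y) x` with `y ≠ 0` vanishes identically in `S`. Taking for `S` a multiple of a shortest
path from `x` to the support of `y`, ending at `z`, this entry is `u S x z * y z`, and an
eigenvector of a path that vanishes at one end vanishes everywhere.
-/

section Analytic

open Topology

variable {E : Type*} [NormedAddCommGroup E] [NormedSpace ℝ E]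

theorem exists_analyticAt_rightInverse [FiniteDimensional ℝ E] {f : E → E} {a : E}
    (hf : AnalyticAt ℝ f a) (hinj : Function.Injective (fderiv ℝ f a)) :
    ∃ u : E → E, AnalyticAt ℝ u (f a) ∧ u (f a) = a ∧ ∀ᶠ y in 𝓝 (f a), f (u y) = y := by
  have := FiniteDimensional.complete ℝ E
  let f' : E ≃L[ℝ] E :=
    (LinearEquiv.ofInjectiveEndo (fderiv ℝ f a : E →ₗ[ℝ] E) hinj).toContinuousLinearEquiv
  have hf' : HasStrictFDerivAt f (f' : E →L[ℝ] E) a := hf.hasStrictFDerivAt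
  refine ⟨hf'.localInverse, ?_, hf'.localInverse_apply_image, hf'.eventually_right_inverse⟩
  exact (hf'.toOpenPartialHomeomorph f).analyticAt_symm' hf'.mem_toOpenPartialHomeomorph_source
    hf hf'.hasFDerivAt.fderiv

theorem frequently_mul_ne_zero {f g : E → ℝ} {x : E}
    (hf : AnalyticAt ℝ f x) (hg : AnalyticAt ℝ g x)
    (hf0 : ∃ᶠ y in 𝓝 x, f y ≠ 0) (hg0 : ∃ᶠ y in 𝓝 x, g y ≠ 0) :
    ∃ᶠ y in 𝓝 x, f y * g y ≠ 0 := by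
  obtain ⟨ε, hε, hball⟩ := Metric.eventually_nhds_iff_ball.mp
    (hf.eventually_analyticAt.and hg.eventually_analyticAt)
  have hmem : Metric.ball x ε ∈ 𝓝 x := Metric.ball_mem_nhds x hε
  intro hzero
  obtain ⟨y, hfy, hy, hzeroy⟩ :=
    (hf0.and_eventually (Eventually.and hmem hzero.eventually_nhds)).exists
  have hgy : g =ᶠ[𝓝 y] 0 := by
    filter_upwards [hzeroy, (hball y hy).1.continuousAt.eventually_ne hfy] with z hz hfz
    exact (mul_eq_zero.mp (not_not.mp hz)).resolve_left hfz
  have hgball : Set.EqOn g 0 (Metric.ball x ε) :=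
    AnalyticOnNhd.eqOn_zero_of_preconnected_of_eventuallyEq_zero (fun z hz ↦ (hball z hz).2)
      (convex_ball x ε).isPreconnected hy hgy
  obtain ⟨z, hgz, hz⟩ := (hg0.and_eventually hmem).exists
  exact hgz (hgball hz)

theorem frequently_forall_ne_zero {ι : Type*} {f : ι → E → ℝ} {x : E} (s : Finset ι)
    (hf : ∀ i ∈ s, AnalyticAt ℝ (f i) x) (hf0 : ∀ i ∈ s, ∃ᶠ y in 𝓝 x, f i y ≠ 0) :
    ∃ᶠ y in 𝓝 x, ∀ i ∈ s, f i y ≠ 0 := by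
  suffices h : ∃ᶠ y in 𝓝 x, ∏ i ∈ s, f i y ≠ 0 by simpa only [Finset.prod_ne_zero_iff] using h
  classical
  induction s using Finset.induction_on with
  | empty => simp
  | insert i s his ih =>
    rw [Finset.forall_mem_insert] at hf hf0
    simp only [Finset.prod_insert his]
    exact frequently_mul_ne_zero hf.1 (Finset.analyticAt_fun_prod s hf.2) hf0.1 (ih hf.2 hf0.2)

theorem frequently_nhds_zero_of_eventually_smul {p : E → Prop} (x : E)
    (h : ∀ᶠ t : ℝ in 𝓝[≠] 0, p (t • x)) : ∃ᶠ y in 𝓝 0, p y := by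
  have hlim : Tendsto (fun t : ℝ ↦ t • x) (𝓝[≠] 0) (𝓝 0) := by
    have : ContinuousAt (fun t : ℝ ↦ t • x) 0 := by fun_prop
    simpa [ContinuousAt] using this.tendsto.mono_left nhdsWithin_le_nhds
  exact hlim.frequently h.frequently

end Analytic

section OrthogonalChart

open Topology
open scoped Matrix.Norms.Operator

variable {V : Type*} [Fintype V] [DecidableEq V]

/-- The inverse eigenvalue gaps `1 / (d j - d i)`. The diagonal entries are `0⁻¹ = 0`, so that
`A ⊙ inverseGap d` forgets the diagonal of `A`. -/
noncomputable def inverseGap (d : V → ℝ) : Matrix V V ℝ :=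
  of fun i j ↦ (d j - d i)⁻¹

/-- A map whose inverse near `1` yields the orthogonal matrices `U` for which `U D Uᵀ`,
`D = diagonal d`, has prescribed off-diagonal part. As `inverseGap d` is antisymmetric, the
symmetric part of the value is `U Uᵀ`, and its antisymmetric part records `U D Uᵀ` off the
diagonal. -/
noncomputable def conjugationChart (d : V → ℝ) (U : Matrix V V ℝ) : Matrix V V ℝ :=
  U * Uᵀ + (U * diagonal d * Uᵀ) ⊙ inverseGap d

theorem conjugationChart_one (d : V → ℝ) : conjugationChart d 1 = 1 := by
  ext i j
  obtain rfl | hij := eq_or_ne i j <;> simp [conjugationChart, inverseGap, *]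

theorem eq_of_conjugationChart_eq {d : V → ℝ} (hd : Function.Injective d) {U S : Matrix V V ℝ}
    (hS : S.IsSymm) (h : conjugationChart d U = 1 + S ⊙ inverseGap d) :
    U * Uᵀ = 1 ∧ ∀ i j, i ≠ j → (U * diagonal d * Uᵀ) i j = S i j := by
  have hP : (U * Uᵀ).IsSymm := isSymm_mul_transpose_self U
  have hQ : (U * diagonal d * Uᵀ).IsSymm := by
    simp [IsSymm, Matrix.mul_assoc]
  have hgap (i j : V) : inverseGap d j i = -inverseGap d i j := by
    simp [inverseGap, ← inv_neg]
  unfold conjugationChart at h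
  generalize U * Uᵀ = P, U * diagonal d * Uᵀ = Q at *
  have hentry (i j : V) : P i j + Q i j * inverseGap d i j
      = (1 : Matrix V V ℝ) i j + S i j * inverseGap d i j := congrFun₂ h i j
  have hentry' (i j : V) : P i j - Q i j * inverseGap d i j
      = (1 : Matrix V V ℝ) i j - S i j * inverseGap d i j := by
    have := hentry j i
    rw [hgap i j, hP.apply i j, hQ.apply i j, hS.apply i j, isSymm_one.apply i j] at this
    linear_combination this
  refine ⟨?_, fun i j hij ↦ ?_⟩
  · ext i j
    linear_combination (hentry i j + hentry' i j) / 2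
  · have : inverseGap d i j ≠ 0 := by
      simpa [inverseGap, sub_eq_zero] using hd.ne hij.symm
    apply mul_right_cancel₀ this
    linear_combination (hentry i j - hentry' i j) / 2

/-- Transposition as a continuous linear map, for calculus on square matrices. -/
noncomputable def transposeCLM : Matrix V V ℝ →L[ℝ] Matrix V V ℝ :=
  (transposeLinearEquiv V V ℝ ℝ).toLinearMap.toContinuousLinearMap

/-- The entrywise product with `B` as a continuous linear map, for calculus on square matrices. -/
noncomputable def hadamardCLM (B : Matrix V V ℝ) : Matrix V V ℝ →L[ℝ] Matrix V V ℝ :=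
  LinearMap.toContinuousLinearMap
    { toFun := fun A ↦ A ⊙ B
      map_add' := fun A A' ↦ add_hadamard B A A'
      map_smul' := fun c A ↦ smul_hadamard A B c }

theorem analyticAt_conjugationChart (d : V → ℝ) (U : Matrix V V ℝ) :
    AnalyticAt ℝ (conjugationChart d) U :=
  (analyticAt_id.mul (transposeCLM.analyticAt U)).add <|
    (hadamardCLM (inverseGap d)).analyticAt _ |>.comp <|
      (analyticAt_id.mul analyticAt_const).mul (transposeCLM.analyticAt U)

theorem fderiv_conjugationChart_one_apply (d : V → ℝ) (X : Matrix V V ℝ) :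
    fderiv ℝ (conjugationChart d) 1 X =
      X + Xᵀ + (X * diagonal d + diagonal d * Xᵀ) ⊙ inverseGap d := by
  have hT : HasFDerivAt (transpose : Matrix V V ℝ → Matrix V V ℝ) transposeCLM 1 :=
    transposeCLM.hasFDerivAt
  have hid : HasFDerivAt (fun U : Matrix V V ℝ ↦ U) (.id ℝ (Matrix V V ℝ)) 1 := hasFDerivAt_id 1
  have hchart : HasFDerivAt (conjugationChart d) _ 1 := (hid.mul' hT).add <|
    (hadamardCLM (inverseGap d)).hasFDerivAt.comp 1 <| (hid.mul_const' (diagonal d)).mul' hT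
  have hX : fderiv ℝ (conjugationChart d) 1 X = 1 * Xᵀ + X * 1ᵀ +
      (1 * diagonal d * Xᵀ + X * diagonal d * 1ᵀ) ⊙ inverseGap d :=
    congrArg (· X) hchart.fderiv
  simpa only [one_mul, transpose_one, mul_one, add_comm] using hX

theorem fderiv_conjugationChart_one_injective {d : V → ℝ} (hd : Function.Injective d) :
    Function.Injective (fderiv ℝ (conjugationChart d) 1) := by
  rw [injective_iff_map_eq_zero]
  intro X hX
  rw [fderiv_conjugationChart_one_apply] at hX
  have hentry (i j : V) :
      X i j + X j i + (X i j * d j + d i * X j i) * (d j - d i)⁻¹ = 0 := by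
    simpa [inverseGap] using congrFun₂ hX i j
  ext i j
  obtain rfl | hij := eq_or_ne i j
  · simpa using hentry i i
  have hne : d j - d i ≠ 0 := sub_ne_zero.mpr (hd.ne hij.symm)
  have hij' := hentry i j
  have hji' := hentry j i
  rw [← neg_sub (d j), inv_neg] at hji'
  have hskew : X j i = -X i j := by linear_combination (hij' + hji') / 2
  rw [hskew] at hij'
  field_simp at hij'
  have : X i j * (d j - d i) = 0 := by linear_combination hij'
  simpa [hne] using this

theorem exists_analyticAt_orthogonal {d : V → ℝ} (hd : Function.Injective d) :
    ∃ u : Matrix V V ℝ → Matrix V V ℝ, AnalyticAt ℝ u 0 ∧ u 0 = 1 ∧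
      ∀ᶠ S in 𝓝 0, S.IsSymm →
        u S * (u S)ᵀ = 1 ∧ ∀ i j, i ≠ j → (u S * diagonal d * (u S)ᵀ) i j = S i j := by
  obtain ⟨u, hu, hu1, hright⟩ := exists_analyticAt_rightInverse
    (analyticAt_conjugationChart d 1) (fderiv_conjugationChart_one_injective hd)
  rw [conjugationChart_one] at hu hu1 hright
  let target (S : Matrix V V ℝ) : Matrix V V ℝ := 1 + hadamardCLM (inverseGap d) S
  have htarget : AnalyticAt ℝ target 0 :=
    analyticAt_const.add ((hadamardCLM (inverseGap d)).analyticAt 0)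
  have htarget0 : target 0 = 1 := by simp [target]
  rw [← htarget0] at hu hright
  refine ⟨u ∘ target, hu.comp htarget, by simp [htarget0, hu1], ?_⟩
  filter_upwards [htarget.continuousAt.eventually hright] with S hchart hS
  exact eq_of_conjugationChart_eq hd hS hchart

end OrthogonalChart

section PathPerturbation

variable {V : Type*} {G : SimpleGraph V}

theorem exists_isPath_avoiding (hG : G.Connected) (x : V) {p : V → Prop} (hp : ∃ z, p z) :
    ∃ z, p z ∧ ∃ w : G.Walk x z, w.IsPath ∧ ∀ i ∈ w.support, p i → i = z := by
  classical
  obtain ⟨z, hz, hmin⟩ := (measure (G.dist x)).wf.has_min {z | p z} hp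
  obtain ⟨w, hw⟩ := hG.exists_walk_length_eq_dist x z
  refine ⟨z, hz, w, w.isPath_of_length_eq_dist hw, fun i hi hpi ↦ ?_⟩
  by_contra hiz
  apply hmin i hpi
  calc G.dist x i ≤ (w.takeUntil i hi).length := SimpleGraph.dist_le _
    _ < w.length := w.length_takeUntil_lt_length hi hiz
    _ = G.dist x z := hw

variable [Fintype V] {R : Type*} [CommRing R] [IsDomain R]

theorem eigenvector_eq_zero_of_isPath {A : Matrix V V R} {v : V → R} {μ : R}
    (hv : A *ᵥ v = μ • v) {x z : V} {w : G.Walk x z} (hw : w.IsPath)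
    (hedge : ∀ i j, s(i, j) ∈ w.edges → A i j ≠ 0)
    (hoff : ∀ i ∈ w.support, ∀ j, j ≠ i → s(i, j) ∉ w.edges → A i j * v j = 0)
    (hx : v x = 0) : v z = 0 := by
  induction w with
  | nil => exact hx
  | @cons x y z hxy w ih =>
    obtain ⟨hw', hxw⟩ := w.cons_isPath_iff hxy |>.mp hw
    simp only [SimpleGraph.Walk.edges_cons, List.mem_cons, SimpleGraph.Walk.support_cons]
      at hedge hoff
    have hy : v y = 0 := by
      have hrow : ∑ j, A x j * v j = 0 := by
        simpa [mulVec, dotProduct, hx] using congrFun hv x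
      rw [Finset.sum_eq_single y _ (by simp)] at hrow
      · exact (mul_eq_zero.mp hrow).resolve_left (hedge x y (.inl rfl))
      · intro j _ hjy
        obtain rfl | hjx := eq_or_ne j x
        · rw [hx, mul_zero]
        · refine hoff x (.inl rfl) j hjx ?_
          rintro (h | h)
          · exact hjy (Sym2.congr_right.mp h)
          · exact hxw (w.fst_mem_support_of_mem_edges h)
    refine ih hw' (fun i j h ↦ hedge i j (.inr h)) (fun i hi j hji h ↦ ?_) hy
    by_cases hij : s(i, j) = s(x, y)
    · obtain ⟨rfl, -⟩ | ⟨-, rfl⟩ := Sym2.eq_iff.mp hij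
      · exact absurd hi hxw
      · rw [hx, mul_zero]
    · exact hoff i (.inr hi) j hji (by simp [hij, h])

variable [DecidableEq V]

theorem apply_eq_zero_of_isolated {A U : Matrix V V R} {d : V → R}
    (hd : Function.Injective d) (hU : U * Uᵀ = 1) (hAU : A * U = U * diagonal d) {j : V}
    (hjj : U j j ≠ 0) (hrow : ∀ k, k ≠ j → A j k = 0) {x : V} (hx : x ≠ j) : U x j = 0 := by
  have hj (k : V) : A j j * U j k = U j k * d k := by
    rw [← mul_diagonal, ← hAU, mul_apply, Finset.sum_eq_single j _ (by simp)]
    intro i _ hij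
    rw [hrow i hij, zero_mul]
  have hAjj : A j j = d j := mul_right_cancel₀ hjj (by rw [hj, mul_comm])
  have hrowU (k : V) (hk : k ≠ j) : U j k = 0 := by
    have : (d j - d k) * U j k = 0 := by linear_combination hj k - U j k * hAjj
    exact (mul_eq_zero.mp this).resolve_left (sub_ne_zero.mpr (hd.ne hk.symm))
  have hxj : ∑ k, U x k * U j k = 0 := by
    simpa [mul_apply, hx] using congrFun₂ hU x j
  rw [Finset.sum_eq_single j (fun k _ hk ↦ by rw [hrowU k hk, mul_zero]) (by simp)] at hxj
  exact (mul_eq_zero.mp hxj).resolve_right hjj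

theorem mulVec_apply_ne_zero_of_isPath {U : Matrix V V R} {d : V → R}
    (hd : Function.Injective d) (hU : U * Uᵀ = 1) (hdiag : ∀ j, U j j ≠ 0)
    {x z : V} {w : G.Walk x z} (hw : w.IsPath)
    (hpattern : ∀ i j, i ≠ j → ((U * diagonal d * Uᵀ) i j ≠ 0 ↔ s(i, j) ∈ w.edges))
    {y : V → R} (hyz : y z ≠ 0) (hy : ∀ i ∈ w.support, y i ≠ 0 → i = z) :
    (U *ᵥ y) x ≠ 0 := by
  have hAU : U * diagonal d * Uᵀ * U = U * diagonal d := by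
    rw [Matrix.mul_assoc, mul_eq_one_comm.mp hU, Matrix.mul_one]
  have hcol : (U * diagonal d * Uᵀ) *ᵥ U.col z = d z • U.col z := by
    ext i
    exact (congrFun₂ hAU i z).trans ((mul_diagonal ..).trans (mul_comm ..))
  generalize U * diagonal d * Uᵀ = A at *
  have hxz : U x z ≠ 0 := fun hxz ↦ hdiag z <|
    eigenvector_eq_zero_of_isPath hcol hw
      (fun i j h ↦ (hpattern i j (w.adj_of_mem_edges h).ne).mpr h)
      (fun i _ j hji h ↦ by rw [not_ne_iff.mp (mt (hpattern i j hji.symm).mp h), zero_mul]) hxz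
  suffices h : ∑ j, U x j * y j = U x z * y z from h.trans_ne (mul_ne_zero hxz hyz)
  refine Finset.sum_eq_single z (fun j _ hjz ↦ ?_) (by simp)
  by_cases hyj : y j = 0
  · rw [hyj, mul_zero]
  have hjw : j ∉ w.support := fun hj ↦ hjz (hy j hj hyj)
  have hrow (k : V) (hk : k ≠ j) : A j k = 0 := by
    by_contra h
    exact hjw (w.fst_mem_support_of_mem_edges ((hpattern j k hk.symm).mp h))
  have hxj : x ≠ j := fun h ↦ hjw (h ▸ w.start_mem_support)
  rw [apply_eq_zero_of_isolated hd hU hAU (hdiag j) hrow hxj, zero_mul]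

end PathPerturbation

section GenericRealisation

open Topology
open scoped Matrix.Norms.Operator

variable {V : Type*} (G : SimpleGraph V)

/-- The adjacency matrix of `G` with weights on its edges, linear in the weights. Weights of pairs
that are not edges are ignored. -/
noncomputable def weightedAdjMatrix : (Sym2 V → ℝ) →ₗ[ℝ] Matrix V V ℝ where
  toFun w := of fun i j ↦ G.edgeSet.indicator w s(i, j)
  map_add' w w' := by ext; simp [Set.indicator_add']
  map_smul' c w := by ext; exact Set.indicator_const_smul_apply _ c w _

theorem weightedAdjMatrix_isSymm (w : Sym2 V → ℝ) : (weightedAdjMatrix G w).IsSymm := by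
  ext i j
  simp [weightedAdjMatrix, Sym2.eq_swap (a := j)]

theorem weightedAdjMatrix_ne_zero_iff (w : Sym2 V → ℝ) (i j : V) :
    weightedAdjMatrix G w i j ≠ 0 ↔ G.Adj i j ∧ w s(i, j) ≠ 0 := by
  simp [weightedAdjMatrix]

variable [Fintype V] [DecidableEq V]

theorem frequently_mulVec_apply_ne_zero_s7 {G : SimpleGraph V} (hG : G.Connected) {d : V → ℝ}
    (hd : Function.Injective d) {u : Matrix V V ℝ → Matrix V V ℝ} (hu : ContinuousAt u 0)
    (hu0 : u 0 = 1)
    (hconj : ∀ᶠ S in 𝓝 0, S.IsSymm →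
      u S * (u S)ᵀ = 1 ∧ ∀ i j, i ≠ j → (u S * diagonal d * (u S)ᵀ) i j = S i j)
    {y : V → ℝ} (hy : y ≠ 0) (x : V) :
    ∃ᶠ w in 𝓝 0, (u (weightedAdjMatrix G w) *ᵥ y) x ≠ 0 := by
  classical
  obtain ⟨z, hz, p, hp, hpy⟩ := exists_isPath_avoiding hG x (Function.ne_iff.mp hy)
  let edges : Sym2 V → ℝ := Set.indicator {e | e ∈ p.edges} 1
  apply frequently_nhds_zero_of_eventually_smul edges
  have hdiag : ∀ᶠ S in 𝓝 0, ∀ j, u S j j ≠ 0 := by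
    refine eventually_all.mpr fun j ↦ ?_
    have : ContinuousAt (fun S ↦ u S j j) 0 := (continuous_id.matrix_elem j j).continuousAt.comp hu
    exact this.eventually_ne (by simp [hu0])
  have hlim : Tendsto (fun t : ℝ ↦ weightedAdjMatrix G (t • edges))
      (𝓝[≠] 0) (𝓝 0) := by
    have : Continuous fun t : ℝ ↦ t • weightedAdjMatrix G edges := by fun_prop
    simpa using (this.tendsto 0).mono_left nhdsWithin_le_nhds
  filter_upwards [hlim.eventually (hconj.and hdiag), self_mem_nhdsWithin] with t ⟨hS, hS'⟩ ht
  obtain ⟨horth, hoff⟩ := hS (weightedAdjMatrix_isSymm G _)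
  refine mulVec_apply_ne_zero_of_isPath hd horth hS' hp (fun i j hij ↦ ?_) hz hpy
  rw [hoff i j hij, weightedAdjMatrix_ne_zero_iff]
  constructor
  · simp +contextual [edges]
  · exact fun h ↦ ⟨p.adj_of_mem_edges h, by simpa [edges, h] using ht⟩

theorem genericallyRealisable_of_connected {G : SimpleGraph V} (hG : G.Connected) {d : V → ℝ}
    (hd : Function.Injective d) : GenericallyRealisable G (Finset.univ.val.map d) := by
  intro Y hY
  obtain ⟨u, hu, hu0, hconj⟩ := exists_analyticAt_orthogonal hd
  let S : (Sym2 V → ℝ) →L[ℝ] Matrix V V ℝ := (weightedAdjMatrix G).toContinuousLinearMap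
  have hS : Tendsto S (𝓝 0) (𝓝 0) := by simpa using S.continuous.tendsto 0
  have hanalytic (y : V → ℝ) (x : V) : AnalyticAt ℝ (fun w ↦ (u (S w) *ᵥ y) x) 0 := by
    let mulVecEntry : Matrix V V ℝ →L[ℝ] ℝ :=
      (LinearMap.proj x ∘ₗ (mulVecBilin ℝ ℝ).flip y).toContinuousLinearMap
    have huS : AnalyticAt ℝ (u ∘ S) 0 :=
      AnalyticAt.comp (by simpa using hu) (S.analyticAt 0)
    exact (mulVecEntry.analyticAt _).comp huS
  have hedge (e : Sym2 V) : ∃ᶠ w : Sym2 V → ℝ in 𝓝 0, w e ≠ 0 :=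
    frequently_nhds_zero_of_eventually_smul 1 <| by
      filter_upwards [self_mem_nhdsWithin] with t ht
      simpa using ht
  -- `S w` has pattern `G` only if no edge weight vanishes, so the weights are made generic as well.
  let f : Sym2 V ⊕ Y × V → (Sym2 V → ℝ) → ℝ :=
    Sum.elim (fun e w ↦ w e) fun yx w ↦ (u (S w) *ᵥ yx.1) yx.2
  have hfreq : ∃ᶠ w in 𝓝 0, ∀ i ∈ Finset.univ, f i w ≠ 0 := by
    refine frequently_forall_ne_zero _ ?_ ?_ <;> rintro (e | ⟨y, x⟩) -
    · exact (ContinuousLinearMap.proj (R := ℝ) (φ := fun _ ↦ ℝ) e).analyticAt 0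
    · exact hanalytic y x
    · exact hedge e
    · exact frequently_mulVec_apply_ne_zero_s7 hG hd hu.continuousAt hu0 hconj (hY y y.2) x
  obtain ⟨w, hw, hSw⟩ := (hfreq.and_eventually (hS.eventually hconj)).exists
  obtain ⟨horth, hoff⟩ := hSw (weightedAdjMatrix_isSymm G w)
  refine ⟨d, u (S w), rfl, mul_eq_one_comm.mp horth, ⟨?_, fun i j hij ↦ ?_⟩, fun y hy x ↦
    hw (.inr (⟨y, hy⟩, x)) (Finset.mem_univ _)⟩
  · simp [IsSymm, Matrix.mul_assoc]
  · rw [hoff i j hij]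
    exact (weightedAdjMatrix_ne_zero_iff G w i j).trans
      (and_iff_left (hw (.inl s(i, j)) (Finset.mem_univ _)))

end GenericRealisation

section Multiset

theorem exists_equiv_comp_eq_of_map_univ_eq {α β κ : Type*} [Fintype α] [Fintype β]
    {f : α → κ} {g : β → κ}
    (h : (Finset.univ.val : Multiset α).map f = (Finset.univ.val : Multiset β).map g) :
    ∃ e : α ≃ β, g ∘ e = f := by
  classical
  have hcard (c : κ) : Fintype.card {a // f a = c} = Fintype.card {b // g b = c} := by
    simpa only [Multiset.count_map, Fintype.card_subtype, Finset.card_def, Finset.filter_val,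
      eq_comm] using congrArg (Multiset.count c) h
  exact ⟨Equiv.ofFiberEquiv fun c ↦ Fintype.equivOfCardEq (hcard c),
    funext (Equiv.ofFiberEquiv_map _)⟩

end Multiset

section Eigendecomposition

theorem inS.affine {V : Type*} [DecidableEq V] {G : SimpleGraph V} {A : Matrix V V ℝ}
    (h : inS G A) {a : ℝ} (ha : a ≠ 0) (b : ℝ) : inS G (a • A + b • 1) := by
  refine ⟨(h.1.smul a).add (isSymm_one.smul b), fun i j hij ↦ ?_⟩
  rw [← h.2 i j hij]
  simp [ha, hij]

variable {V γ : Type*} [Fintype V] [Fintype γ] [DecidableEq V] [DecidableEq γ]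

theorem GenericallyRealisable.nonempty {G : SimpleGraph V} {σ : Multiset ℝ}
    (h : GenericallyRealisable G σ) {μ : ℝ} (hμ : μ ∈ σ) : Nonempty V := by
  obtain ⟨d, -, rfl, -⟩ := h ∅ (by simp)
  exact (Multiset.mem_map.mp hμ).nonempty

theorem GenericallyRealisable.affine {G : SimpleGraph V} {σ : Multiset ℝ}
    (h : GenericallyRealisable G σ) {a : ℝ} (ha : a ≠ 0) (b : ℝ) :
    GenericallyRealisable G (σ.map fun x ↦ a * x + b) := by
  intro Y hY
  obtain ⟨d, U, rfl, hU, hS, hUY⟩ := h Y hY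
  have hconj : U * diagonal (fun i ↦ a * d i + b) * Uᵀ
      = a • (U * diagonal d * Uᵀ) + b • 1 := by
    have hdiag : diagonal (fun i ↦ a * d i + b) = a • diagonal d + b • 1 := by
      ext i j
      obtain rfl | hij := eq_or_ne i j <;> simp [*]
    simp [hdiag, Matrix.mul_add, Matrix.add_mul, mul_eq_one_comm.mp hU]
  exact ⟨fun i ↦ a * d i + b, U, by rw [Multiset.map_map]; rfl, hU, hconj ▸ hS.affine ha b, hUY⟩

/-- `U diag(d) Uᵀ` is an orthogonal diagonalisation of a matrix in `S(G)`. The eigenvalues are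
indexed by a type of their own, not by the vertices, so that they can be labelled independently
of `G`. -/
structure IsEigendecomposition (G : SimpleGraph V) (d : γ → ℝ) (U : Matrix V γ ℝ) : Prop where
  mul_transpose : U * Uᵀ = 1
  transpose_mul : Uᵀ * U = 1
  realises : inS G (U * diagonal d * Uᵀ)

theorem GenericallyRealisable.exists_isEigendecomposition {G : SimpleGraph V} {d : γ → ℝ}
    (hG : GenericallyRealisable G (Finset.univ.val.map d)) {ι : Type*} [Finite ι]
    (y : ι → γ → ℝ) (hy : ∀ i, y i ≠ 0) :
    ∃ U, IsEigendecomposition G d U ∧ ∀ i x, (U *ᵥ y i) x ≠ 0 := by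
  classical
  have := Fintype.ofFinite ι
  -- The bijection between vertices and eigenvalue labels is only known once `U` is, so `U` is made
  -- generic for all of them at once.
  obtain ⟨d₀, U, hd₀, hU, hS, hyU⟩ := hG
    (Finset.univ.image fun p : (V ≃ γ) × ι ↦ y p.2 ∘ p.1) (by
      simp only [Finset.forall_mem_image, Finset.mem_univ, true_imp_iff]
      exact fun p h ↦ hy p.2 (p.1.surjective.injective_comp_right h))
  obtain ⟨e, rfl⟩ := exists_equiv_comp_eq_of_map_univ_eq hd₀
  refine ⟨U.submatrix id e.symm, ⟨?_, ?_, ?_⟩, fun i x ↦ ?_⟩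
  · rw [transpose_submatrix, submatrix_mul_equiv, mul_eq_one_comm.mp hU, submatrix_id_id]
  · rw [transpose_submatrix, ← submatrix_mul _ _ _ _ _ Function.bijective_id, hU,
      submatrix_one_equiv]
  · have hd : diagonal d = (diagonal (d ∘ e)).submatrix e.symm e.symm := by
      simp [Function.comp_assoc]
    rwa [hd, transpose_submatrix, submatrix_mul_equiv, submatrix_mul_equiv, submatrix_id_id]
  · rw [submatrix_mulVec_equiv]
    exact hyU _ (Finset.mem_image.mpr ⟨(e, i), Finset.mem_univ _, rfl⟩) x

theorem blockDiagonal'_inS_sigmaGraph {ι : Type*} [DecidableEq ι] {α : ι → Type*}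
    {G : ∀ i, SimpleGraph (α i)} {A : ∀ i, Matrix (α i) (α i) ℝ} (hA : ∀ i, inS (G i) (A i)) :
    inS (sigmaGraph G) (blockDiagonal' A) := by
  refine ⟨?_, ?_⟩
  · rw [IsSymm, blockDiagonal'_transpose]
    exact congrArg blockDiagonal' (funext fun i ↦ (hA i).1)
  · rintro ⟨i, a⟩ ⟨j, b⟩ hij
    obtain rfl | h := eq_or_ne i j
    · have hab : a ≠ b := fun h ↦ hij (h ▸ rfl)
      rw [blockDiagonal'_apply_eq, (hA i).2 a b hab]
      constructor
      · exact fun h ↦ ⟨i, a, b, h, rfl, rfl⟩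
      · rintro ⟨_, _, _, h, ⟨⟩, ⟨⟩⟩
        exact h
    · rw [blockDiagonal'_apply_ne _ _ _ h]
      refine iff_of_false (not_not.mpr rfl) ?_
      rintro ⟨_, _, _, -, ⟨⟩, ⟨⟩⟩
      exact h rfl

theorem IsEigendecomposition.sigma {ι : Type*} [Fintype ι] [DecidableEq ι] {α γ : ι → Type*}
    [∀ i, Fintype (α i)] [∀ i, DecidableEq (α i)] [∀ i, Fintype (γ i)] [∀ i, DecidableEq (γ i)]
    {G : ∀ i, SimpleGraph (α i)} {d : ∀ i, γ i → ℝ} {U : ∀ i, Matrix (α i) (γ i) ℝ}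
    (h : ∀ i, IsEigendecomposition (G i) (d i) (U i)) :
    IsEigendecomposition (sigmaGraph G) (fun p ↦ d p.1 p.2) (blockDiagonal' U) where
  mul_transpose := by
    simp [blockDiagonal'_transpose, ← blockDiagonal'_mul, (h _).mul_transpose,
      ← Pi.one_def]
  transpose_mul := by
    simp [blockDiagonal'_transpose, ← blockDiagonal'_mul, (h _).transpose_mul,
      ← Pi.one_def]
  realises := by
    rw [← blockDiagonal'_diagonal, blockDiagonal'_transpose, ← blockDiagonal'_mul,
      ← blockDiagonal'_mul]
    exact blockDiagonal'_inS_sigmaGraph fun i ↦ (h i).realises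

theorem exists_isEigendecomposition_mul_mul_ne_zero {ι κ : Type*} [Finite ι] [Finite κ]
    {α γ : ι → Type*} [∀ i, Fintype (α i)] [∀ i, DecidableEq (α i)]
    [∀ i, Fintype (γ i)] [∀ i, DecidableEq (γ i)]
    {β δ : κ → Type*} [∀ s, Fintype (β s)] [∀ s, DecidableEq (β s)]
    [∀ s, Fintype (δ s)] [∀ s, DecidableEq (δ s)]
    {G : ∀ i, SimpleGraph (α i)} {d : ∀ i, γ i → ℝ}
    (hG : ∀ i, GenericallyRealisable (G i) (Finset.univ.val.map (d i)))
    {H : ∀ s, SimpleGraph (β s)} {d' : ∀ s, δ s → ℝ}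
    (hH : ∀ s, GenericallyRealisable (H s) (Finset.univ.val.map (d' s)))
    (Z : ∀ i s, Matrix (γ i) (δ s) ℝ) (hZ : ∀ i s, Z i s ≠ 0) :
    ∃ (U : ∀ i, Matrix (α i) (γ i) ℝ) (U' : ∀ s, Matrix (β s) (δ s) ℝ),
      (∀ i, IsEigendecomposition (G i) (d i) (U i)) ∧
      (∀ s, IsEigendecomposition (H s) (d' s) (U' s)) ∧
      ∀ i s x y, (U i * Z i s * (U' s)ᵀ) x y ≠ 0 := by
  choose a ha using fun i s ↦ Function.ne_iff.mp (hZ i s)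
  choose U' hU' hZU' using fun s ↦
    (hH s).exists_isEigendecomposition (fun i ↦ Z i s (a i s)) fun i ↦ ha i s
  have hcol (i : ι) (p : Σ s, β s) : (Z i p.1 * (U' p.1)ᵀ).col p.2 ≠ 0 :=
    Function.ne_iff.mpr ⟨a i p.1, by
      simpa [mulVec, dotProduct, mul_apply, mul_comm] using hZU' p.1 i p.2⟩
  choose U hU hUZU' using fun i ↦
    (hG i).exists_isEigendecomposition (fun p : Σ s, β s ↦ (Z i p.1 * (U' p.1)ᵀ).col p.2) (hcol i)
  refine ⟨U, U', hU, hU', fun i s x y ↦ ?_⟩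
  rw [Matrix.mul_assoc]
  exact hUZU' i ⟨s, y⟩ x

end Eigendecomposition

section MultiplicityMatching

variable {α β : Type*} [Fintype α] [Fintype β] [DecidableEq α] [DecidableEq β]

theorem householder_mul_self {R : Type*} [Field R] {v : α → R} (hv : v ⬝ᵥ v ≠ 0) :
    (1 - (2 / (v ⬝ᵥ v)) • vecMulVec v v) * (1 - (2 / (v ⬝ᵥ v)) • vecMulVec v v) = 1 := by
  have hsq : (2 / (v ⬝ᵥ v)) • vecMulVec v v * (2 / (v ⬝ᵥ v)) • vecMulVec v v
      = (2 : R) • (2 / (v ⬝ᵥ v)) • vecMulVec v v := by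
    rw [smul_mul_smul_comm, vecMulVec_mul_vecMulVec, vecMulVec_smul, smul_smul, smul_smul]
    congr 1
    field
  rw [Matrix.sub_mul, Matrix.mul_sub, Matrix.mul_sub, hsq, Matrix.one_mul, Matrix.one_mul,
    Matrix.mul_one]
  module

variable (α) in
theorem exists_symm_orthogonal_forall_ne_zero :
    ∃ N : Matrix α α ℝ, N.IsSymm ∧ N * N = 1 ∧ ∀ i j, N i j ≠ 0 := by
  obtain _ | ⟨⟨i₀⟩⟩ := isEmpty_or_nonempty α
  · exact ⟨1, isSymm_one, Matrix.one_mul 1, isEmptyElim⟩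
  -- Reflection in `(1, 2, …, 2)`: its diagonal entries are nonzero because `v ⬝ᵥ v` is odd.
  let v : α → ℝ := Function.update (fun _ ↦ 2) i₀ 1
  have hv : v ⬝ᵥ v = 4 * (Fintype.card α - 1 : ℕ) + 1 := by
    rw [dotProduct, ← Finset.add_sum_erase _ _ (Finset.mem_univ i₀),
      Finset.sum_congr rfl fun i hi ↦ by rw [show v i = 2 by simp [v, Finset.ne_of_mem_erase hi]]]
    simp [v]
    ring
  have hv0 : v ⬝ᵥ v ≠ 0 := by rw [hv]; positivity
  have hvi (i : α) : v i = 1 ∨ v i = 2 := by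
    obtain rfl | h := eq_or_ne i i₀ <;> simp [v, *]
  have hodd (i : α) : 2 * (v i * v i) ≠ v ⬝ᵥ v := by
    rw [hv]
    obtain h | h := hvi i <;> rw [h] <;> norm_num <;> norm_cast <;> lia
  refine ⟨1 - (2 / (v ⬝ᵥ v)) • vecMulVec v v, ?_, householder_mul_self hv0, fun i j ↦ ?_⟩
  · simp [IsSymm, transpose_vecMulVec]
  · obtain rfl | hij := eq_or_ne i j
    · have hii : (1 - (2 / (v ⬝ᵥ v)) • vecMulVec v v) i i
          = (v ⬝ᵥ v - 2 * (v i * v i)) / (v ⬝ᵥ v) := by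
        simp only [Matrix.sub_apply, one_apply_eq, Matrix.smul_apply, vecMulVec_apply, smul_eq_mul]
        field
      rw [hii]
      exact div_ne_zero (sub_ne_zero.mpr (hodd i).symm) hv0
    · have hvne (k : α) : v k ≠ 0 := by rcases hvi k with h | h <;> simp [h]
      simp [vecMulVec_apply, hij, hv0, hvne]

theorem exists_orthogonal_forall_ne_zero (h : Fintype.card α = Fintype.card β) :
    ∃ N : Matrix α β ℝ, N * Nᵀ = 1 ∧ Nᵀ * N = 1 ∧ ∀ a b, N a b ≠ 0 := by
  obtain ⟨N, hsymm, hsq, hne⟩ := exists_symm_orthogonal_forall_ne_zero α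
  let e : β ≃ α := (Fintype.equivOfCardEq h).symm
  refine ⟨N.submatrix id e, ?_, ?_, fun a b ↦ hne a (e b)⟩
  · rw [transpose_submatrix, hsymm.eq, submatrix_mul_equiv, hsq, submatrix_id_id]
  · rw [transpose_submatrix, hsymm.eq, ← submatrix_mul _ _ _ _ _ Function.bijective_id, hsq,
      submatrix_one_equiv]

theorem exists_mul_transpose_eq_diagonal_sq {τ : Type*} [Finite τ] [DecidableEq τ]
    (ρ : α → τ) (ρ' : β → τ) (c : τ → ℝ) (hcard : ∀ t, c t ≠ 0 →
      Fintype.card {a // ρ a = t} = Fintype.card {b // ρ' b = t}) :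
    ∃ Z : Matrix α β ℝ, Z * Zᵀ = diagonal (fun a ↦ c (ρ a) ^ 2) ∧
      Zᵀ * Z = diagonal (fun b ↦ c (ρ' b) ^ 2) ∧
      ∀ a b, Z a b ≠ 0 ↔ ρ a = ρ' b ∧ c (ρ a) ≠ 0 := by
  have := Fintype.ofFinite τ
  have hblock (t : τ) : ∃ N : Matrix {a // ρ a = t} {b // ρ' b = t} ℝ,
      N * Nᵀ = diagonal (fun _ ↦ c t ^ 2) ∧ Nᵀ * N = diagonal (fun _ ↦ c t ^ 2) ∧
      ∀ a b, N a b ≠ 0 ↔ c t ≠ 0 := by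
    by_cases hc : c t = 0
    · exact ⟨0, by simp [hc], by simp [hc], by simp [hc]⟩
    · obtain ⟨N, hN, hN', hne⟩ := exists_orthogonal_forall_ne_zero (hcard t hc)
      exact ⟨c t • N, by simp [hN, smul_smul, sq, ← smul_one_eq_diagonal],
        by simp [hN', smul_smul, sq, ← smul_one_eq_diagonal], by simp [hc, hne]⟩
  choose N hN hN' hne using hblock
  have hpattern : ∀ p q, blockDiagonal' N p q ≠ 0 ↔ p.1 = q.1 ∧ c p.1 ≠ 0 := by
    rintro ⟨t, a⟩ ⟨t', b⟩
    obtain rfl | h := eq_or_ne t t'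
    · rw [blockDiagonal'_apply_eq, hne, and_iff_right rfl]
    · simp [blockDiagonal'_apply_ne _ _ _ h, h]
  refine ⟨(blockDiagonal' N).submatrix (Equiv.sigmaFiberEquiv ρ).symm
    (Equiv.sigmaFiberEquiv ρ').symm, ?_, ?_, fun a b ↦ ?_⟩
  · rw [transpose_submatrix, submatrix_mul_equiv, blockDiagonal'_transpose, ← blockDiagonal'_mul]
    simp [hN]
  · rw [transpose_submatrix, submatrix_mul_equiv, blockDiagonal'_transpose, ← blockDiagonal'_mul]
    simp [hN']
  · exact hpattern ⟨ρ a, a, rfl⟩ ⟨ρ' b, b, rfl⟩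

end MultiplicityMatching

section Join

variable {V W : Type*} {G : SimpleGraph V} {H : SimpleGraph W}

theorem fromBlocks_inS_graphJoin {A : Matrix V V ℝ} {C : Matrix W W ℝ} (hA : inS G A)
    (hC : inS H C) {B : Matrix V W ℝ} (hB : ∀ x y, B x y ≠ 0) :
    inS (graphJoin G H) (fromBlocks A B Bᵀ C) := by
  refine ⟨hA.1.fromBlocks rfl hC.1, ?_⟩
  rintro (x | x) (y | y) hxy
  · simpa [graphJoin, partialJoin] using hA.2 x y (by simpa using hxy)
  · simpa [graphJoin, partialJoin] using hB x y
  · simpa [graphJoin, partialJoin] using hB y x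
  · simpa [graphJoin, partialJoin] using hC.2 x y (by simpa using hxy)

variable [Fintype V] [Fintype W] [DecidableEq V] [DecidableEq W]
  {γ δ : Type*} [Fintype γ] [Fintype δ] [DecidableEq γ] [DecidableEq δ]

theorem exists_inS_graphJoin_mul_self_eq_one {d : γ → ℝ} {U : Matrix V γ ℝ}
    (hU : IsEigendecomposition G d U) {d' : δ → ℝ} {U' : Matrix W δ ℝ}
    (hU' : IsEigendecomposition H d' U') {Z : Matrix γ δ ℝ}
    (hZ : Z * Zᵀ = diagonal fun a ↦ 1 - d a ^ 2) (hZ' : Zᵀ * Z = diagonal fun b ↦ 1 - d' b ^ 2)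
    (hdd' : ∀ a b, Z a b ≠ 0 → d a + d' b = 0) (hne : ∀ x y, (U * Z * U'ᵀ) x y ≠ 0) :
    ∃ M, inS (graphJoin G H) M ∧ M * M = 1 := by
  refine ⟨_, fromBlocks_inS_graphJoin hU.realises hU'.realises hne, ?_⟩
  have hsq : diagonal d * diagonal d + Z * Zᵀ = 1 := by
    simp [hZ, sq]
  have hsq' : Zᵀ * Z + diagonal d' * diagonal d' = 1 := by
    simp [hZ', sq]
  have hanti : diagonal d * Z + Z * diagonal d' = 0 := by
    ext a b
    by_cases hab : Z a b = 0
    · simp [hab]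
    · simp only [Matrix.add_apply, diagonal_mul, mul_diagonal, Matrix.zero_apply]
      linear_combination Z a b * hdd' a b hab
  have hanti' : Zᵀ * diagonal d + diagonal d' * Zᵀ = 0 := by
    simpa using congrArg transpose hanti
  have hconj : fromBlocks (U * diagonal d * Uᵀ) (U * Z * U'ᵀ) (U * Z * U'ᵀ)ᵀ
      (U' * diagonal d' * U'ᵀ) =
      fromBlocks U 0 0 U' * fromBlocks (diagonal d) Z Zᵀ (diagonal d') *
        (fromBlocks U 0 0 U')ᵀ := by
    simp [fromBlocks_multiply, fromBlocks_transpose, Matrix.mul_assoc]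
  have hQ : (fromBlocks U 0 0 U')ᵀ * fromBlocks U 0 0 U' = 1 := by
    simp [fromBlocks_multiply, fromBlocks_transpose, hU.transpose_mul, hU'.transpose_mul]
  have hQ' : fromBlocks U 0 0 U' * (fromBlocks U 0 0 U')ᵀ = 1 := by
    simp [fromBlocks_multiply, fromBlocks_transpose, hU.mul_transpose, hU'.mul_transpose]
  have hK : fromBlocks (diagonal d) Z Zᵀ (diagonal d') *
      fromBlocks (diagonal d) Z Zᵀ (diagonal d') = 1 := by
    rw [fromBlocks_multiply, hsq, hsq', hanti, hanti', fromBlocks_one]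
  rw [hconj]
  generalize fromBlocks U 0 0 U' = Q, fromBlocks (diagonal d) Z Zᵀ (diagonal d') = K at hQ hQ' hK ⊢
  calc Q * K * Qᵀ * (Q * K * Qᵀ) = Q * K * (Qᵀ * Q) * K * Qᵀ := by simp only [Matrix.mul_assoc]
    _ = Q * (K * K) * Qᵀ := by rw [hQ, Matrix.mul_one, Matrix.mul_assoc Q]
    _ = 1 := by rw [hK, Matrix.mul_one, hQ']

end Join

section DistinctEigenvalues

variable {V : Type*} [Fintype V] [DecidableEq V]

theorem coe_toFinset_specMultiset (A : Matrix V V ℝ) :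
    ((specMultiset A).toFinset : Set ℝ) = spectrum ℝ A := by
  ext μ
  rw [mem_spectrum_iff_isRoot_charpoly, SetLike.mem_coe, Multiset.mem_toFinset, specMultiset,
    Polynomial.mem_roots A.charpoly_monic.ne_zero]

theorem qMat_le_two_of_mul_self_eq_one {M : Matrix V V ℝ} (hM : M * M = 1) : qMat M ≤ 2 := by
  suffices h : (specMultiset M).toFinset ⊆ {1, -1} from
    (Finset.card_le_card h).trans Finset.card_le_two
  intro μ hμ
  rw [← SetLike.mem_coe, coe_toFinset_specMultiset] at hμ
  have hsq : μ ^ 2 ∈ spectrum ℝ (1 : Matrix V V ℝ) := by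
    simpa only [sq M, hM] using spectrum.pow_mem_pow M 2 hμ
  obtain _ | _ := subsingleton_or_nontrivial (Matrix V V ℝ)
  · simp [spectrum.of_subsingleton] at hsq
  · simpa [spectrum.one_eq] using hsq

theorem two_le_qMat {A : Matrix V V ℝ} (hA : A.IsSymm) {i j : V} (hij : i ≠ j)
    (hAij : A i j ≠ 0) : 2 ≤ qMat A := by
  by_contra! h
  obtain ⟨μ, hμ⟩ := Finset.card_le_one_iff_subset_singleton.mp (Nat.le_of_lt_succ h)
  rw [← Finset.coe_subset, coe_toFinset_specMultiset, Finset.coe_singleton] at hμ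
  have hself : IsSelfAdjoint A := by
    rw [IsSelfAdjoint, star_eq_conjTranspose, conjTranspose_eq_transpose_of_trivial, hA.eq]
  rw [CFC.eq_algebraMap_of_spectrum_subset_singleton A μ hμ] at hAij
  exact hAij (algebraMap_matrix_apply.trans (if_neg hij))

theorem qGraph_eq_two_of_mul_self_eq_one {G : SimpleGraph V} {a b : V} (hab : G.Adj a b)
    {M : Matrix V V ℝ} (hM : inS G M) (hMM : M * M = 1) : qGraph G = 2 := by
  have hM2 : qMat M = 2 := (qMat_le_two_of_mul_self_eq_one hMM).antisymm
    (two_le_qMat hM.1 hab.ne ((hM.2 a b hab.ne).mpr hab))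
  refine le_antisymm (Nat.sInf_le ⟨M, hM, hM2⟩) (le_csInf ⟨2, M, hM, hM2⟩ ?_)
  rintro _ ⟨A, hA, rfl⟩
  exact two_le_qMat hA.1 hab.ne ((hA.2 a b hab.ne).mpr hab)

end DistinctEigenvalues

section JoinOfUnions

theorem blockDiagonal'_mul_mul_transpose_apply {ι κ R : Type*} [CommSemiring R] [Fintype ι]
    [Fintype κ] [DecidableEq ι] [DecidableEq κ] {α γ : ι → Type*} [∀ i, Fintype (γ i)]
    {β δ : κ → Type*} [∀ s, Fintype (δ s)] (U : ∀ i, Matrix (α i) (γ i) R)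
    (Z : Matrix (Σ i, γ i) (Σ s, δ s) R) (U' : ∀ s, Matrix (β s) (δ s) R)
    (p : Σ i, α i) (q : Σ s, β s) :
    (blockDiagonal' U * Z * (blockDiagonal' U')ᵀ) p q =
      (U p.1 * Z.submatrix (Sigma.mk p.1) (Sigma.mk q.1) * (U' q.1)ᵀ) p.2 q.2 := by
  obtain ⟨i, x⟩ := p
  obtain ⟨s, y⟩ := q
  have hleft (b : Σ s, δ s) : (blockDiagonal' U * Z) ⟨i, x⟩ b = ∑ a, U i x a * Z ⟨i, a⟩ b := by
    rw [mul_apply, Fintype.sum_sigma, Fintype.sum_eq_single i fun j hj ↦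
      Finset.sum_eq_zero fun a _ ↦ by rw [blockDiagonal'_apply_ne _ _ _ hj.symm, zero_mul]]
    simp only [blockDiagonal'_apply_eq]
  rw [mul_apply, Fintype.sum_sigma, Fintype.sum_eq_single s fun j hj ↦
    Finset.sum_eq_zero fun b _ ↦ by
      rw [transpose_apply, blockDiagonal'_apply_ne _ _ _ hj.symm, mul_zero]]
  simp only [hleft, transpose_apply, blockDiagonal'_apply_eq, mul_apply, submatrix_apply]

theorem exists_inS_graphJoin_sigmaGraph_mul_self_eq_one {ι κ τ : Type*} [Fintype ι] [Fintype κ]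
    [Finite τ] [DecidableEq ι] [DecidableEq κ] [DecidableEq τ]
    {α γ : ι → Type*} [∀ i, Fintype (α i)] [∀ i, DecidableEq (α i)]
    [∀ i, Fintype (γ i)] {β δ : κ → Type*} [∀ s, Fintype (β s)] [∀ s, DecidableEq (β s)]
    [∀ s, Fintype (δ s)] {G : ∀ i, SimpleGraph (α i)} {H : ∀ s, SimpleGraph (β s)} {μ : τ → ℝ}
    (hμ : ∀ t, μ t ^ 2 ≤ 1) {ρ : ∀ i, γ i → τ} {ρ' : ∀ s, δ s → τ}
    (hG : ∀ i, GenericallyRealisable (G i) (Finset.univ.val.map fun a ↦ μ (ρ i a)))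
    (hH : ∀ s, GenericallyRealisable (H s) (Finset.univ.val.map fun b ↦ -μ (ρ' s b)))
    (hcard : ∀ t, μ t ^ 2 ≠ 1 → Fintype.card {p : Σ i, γ i // ρ p.1 p.2 = t} =
      Fintype.card {q : Σ s, δ s // ρ' q.1 q.2 = t})
    (hne : ∀ i s, ∃ a b, ρ i a = ρ' s b ∧ μ (ρ i a) ^ 2 ≠ 1) :
    ∃ M, inS (graphJoin (sigmaGraph G) (sigmaGraph H)) M ∧ M * M = 1 := by
  classical
  have hsq (t : τ) : √(1 - μ t ^ 2) ^ 2 = 1 - μ t ^ 2 := Real.sq_sqrt (sub_nonneg.mpr (hμ t))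
  have hsqrt (t : τ) : √(1 - μ t ^ 2) ≠ 0 ↔ μ t ^ 2 ≠ 1 := by
    rw [← pow_ne_zero_iff two_ne_zero, hsq, sub_ne_zero, ne_comm]
  obtain ⟨Z, hZ, hZ', hZne⟩ := exists_mul_transpose_eq_diagonal_sq (fun p : Σ i, γ i ↦ ρ p.1 p.2)
    (fun q : Σ s, δ s ↦ ρ' q.1 q.2) (fun t ↦ √(1 - μ t ^ 2)) fun t ht ↦
      hcard t ((hsqrt t).mp ht)
  have hblock (i : ι) (s : κ) : Z.submatrix (Sigma.mk i) (Sigma.mk s) ≠ 0 := by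
    obtain ⟨a, b, hab, ha⟩ := hne i s
    exact fun h ↦ (hZne ⟨i, a⟩ ⟨s, b⟩).mpr ⟨hab, (hsqrt _).mpr ha⟩ (congrFun₂ h a b)
  obtain ⟨U, U', hU, hU', hUZU'⟩ := exists_isEigendecomposition_mul_mul_ne_zero hG hH _ hblock
  refine exists_inS_graphJoin_mul_self_eq_one (.sigma hU) (.sigma hU') (Z := Z)
    (by simp only [hZ, hsq]) (by simp only [hZ', hsq, neg_sq]) (fun p q hpq ↦ ?_) fun p q ↦ ?_
  · rw [((hZne p q).mp hpq).1, add_neg_cancel]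
  · rw [blockDiagonal'_mul_mul_transpose_apply]
    exact hUZU' p.1 q.1 p.2 q.2

end JoinOfUnions

section Compatibility

/-- The spectrum in which each `lam t` has multiplicity `v t`, in the form used in
`IsOrderedMultiplicityList`. -/
def eigenvalueMultiset {τ : Type*} [Fintype τ] (v : τ → ℕ) (lam : τ → ℝ) : Multiset ℝ :=
  Finset.univ.val.bind fun t ↦ Multiset.replicate (v t) (lam t)

theorem eigenvalueMultiset_eq_map {τ : Type*} [Fintype τ] (v : τ → ℕ) (lam : τ → ℝ) :
    eigenvalueMultiset v lam =
      Finset.univ.val.map fun p : Σ t, Fin (v t) ↦ lam p.1 := by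
  change _ = (Finset.univ.val.bind fun t ↦ Finset.univ.val.map (Sigma.mk t)).map _
  simp only [eigenvalueMultiset, Multiset.map_bind, Multiset.map_map, Function.comp_def,
    Multiset.map_const', Finset.card_val, Finset.card_univ, Fintype.card_fin]

theorem mem_eigenvalueMultiset {τ : Type*} [Fintype τ] {v : τ → ℕ} {t : τ} (ht : v t ≠ 0)
    (lam : τ → ℝ) : lam t ∈ eigenvalueMultiset v lam :=
  Multiset.mem_bind.mpr ⟨t, Finset.mem_univ t, Multiset.mem_replicate.mpr ⟨ht, rfl⟩⟩

theorem genericallyRealisable_eigenvalueMultiset_of_connected {V τ : Type*} [Fintype V]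
    [DecidableEq V] [Fintype τ] {G : SimpleGraph V} (hG : G.Connected) {v : τ → ℕ}
    (hv : ∀ t, v t ≤ 1) (hcard : ∑ t, v t = Fintype.card V) {lam : τ → ℝ}
    (hlam : Function.Injective lam) : GenericallyRealisable G (eigenvalueMultiset v lam) := by
  obtain ⟨e⟩ : Nonempty (V ≃ Σ t, Fin (v t)) := Fintype.card_eq.mp (by simp [hcard])
  have hinj : Function.Injective fun p : Σ t, Fin (v t) ↦ lam p.1 := by
    rintro ⟨s, a⟩ ⟨t, b⟩ hst
    obtain rfl := hlam hst
    have := Fin.subsingleton_iff_le_one.mpr (hv s)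
    rw [Subsingleton.elim a b]
  rw [eigenvalueMultiset_eq_map, ← Finset.map_univ_equiv e, Finset.map_val, Multiset.map_map]
  exact genericallyRealisable_of_connected hG (hinj.comp e.injective)

theorem card_sigma_sigma_fin_fiber {ι τ : Type*} [Fintype ι] [Fintype τ] [DecidableEq τ]
    (V : τ → ι → ℕ) (t : τ) :
    Fintype.card {p : Σ i, Σ t, Fin (V t i) // p.2.1 = t} = ∑ i, V t i := by
  let e : {p : Σ i, Σ t, Fin (V t i) // p.2.1 = t} ≃ Σ i, Fin (V t i) :=
    { toFun := fun p ↦ ⟨p.1.1, p.1.2.2.cast (by rw [p.2])⟩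
      invFun := fun p ↦ ⟨⟨p.1, t, p.2⟩, rfl⟩
      left_inv := by rintro ⟨⟨i, t, a⟩, rfl⟩; rfl
      right_inv := fun _ ↦ rfl }
  simp [Fintype.card_congr e]

theorem exists_affine_sq_le_one {r : ℕ} (hr : 1 < r) {lam : Fin r → ℝ} (hlam : StrictMono lam) :
    ∃ a b : ℝ, a ≠ 0 ∧ ∀ j, (a * lam j + b) ^ 2 ≤ 1 ∧
      ((a * lam j + b) ^ 2 ≠ 1 ↔ j ∈ interiorRows r) := by
  let first : Fin r := ⟨0, by lia⟩
  let last : Fin r := ⟨r - 1, by lia⟩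
  have hgap : 0 < lam last - lam first :=
    sub_pos.mpr (hlam (Fin.mk_lt_mk.mpr (by lia)))
  -- The affine map with `lam first ↦ -1` and `lam last ↦ 1`.
  have hfactor (x : ℝ) : (2 / (lam last - lam first) * x -
      (lam last + lam first) / (lam last - lam first)) ^ 2 =
        1 - 4 * ((x - lam first) * (lam last - x)) / (lam last - lam first) ^ 2 := by
    field
  refine ⟨2 / (lam last - lam first), -((lam last + lam first) / (lam last - lam first)),
    by positivity, fun j ↦ ⟨?_, ?_⟩⟩ <;> rw [← sub_eq_add_neg, hfactor]
  · have hfirst : 0 ≤ lam j - lam first := sub_nonneg.mpr (hlam.monotone (Nat.zero_le _))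
    have hlast : 0 ≤ lam last - lam j :=
      sub_nonneg.mpr (hlam.monotone (Fin.le_def.mpr (by grind)))
    rw [sub_le_self_iff]
    positivity
  · have hne : j ∈ interiorRows r ↔ ¬(j = first ∨ last = j) := by
      simp [interiorRows, first, last, Fin.ext_iff, eq_comm]
    simp [hne, sub_eq_zero, hgap.ne', hlam.injective.eq_iff]

theorem statement7_general {r k l : ℕ} (hk : 1 ≤ k) (hl : 1 ≤ l) {α : Fin k → Type*}
    {β : Fin l → Type*} [∀ i, Fintype (α i)] [∀ i, DecidableEq (α i)]
    [∀ s, Fintype (β s)] [∀ s, DecidableEq (β s)]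
    (G : ∀ i, SimpleGraph (α i)) (H : ∀ s, SimpleGraph (β s))
    {V : Fin r → Fin k → ℕ} {W : Fin r → Fin l → ℕ} (hcomp : Compatible V W)
    {lam : Fin r → ℝ} (hlam : StrictMono lam)
    (hG : ∀ i, GenericallyRealisable (G i) (eigenvalueMultiset (fun j ↦ V j i) lam))
    (hH : ∀ s, GenericallyRealisable (H s) (eigenvalueMultiset (fun j ↦ W j s) lam)) :
    qGraph (graphJoin (sigmaGraph G) (sigmaGraph H)) = 2 := by
  obtain ⟨hrow, hcol⟩ := hcomp
  obtain ⟨i₀, s₀⟩ : Fin k × Fin l := (⟨0, hk⟩, ⟨0, hl⟩)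
  have hcommon (i : Fin k) (s : Fin l) : ∃ j ∈ interiorRows r, V j i ≠ 0 ∧ W j s ≠ 0 := by
    simpa only [mul_ne_zero_iff] using Finset.exists_ne_zero_of_sum_ne_zero (hcol i s)
  have hr : 1 < r := by
    obtain ⟨j, hj, -⟩ := hcommon i₀ s₀
    grind [interiorRows]
  obtain ⟨a, b, ha, hab⟩ := exists_affine_sq_le_one hr hlam
  obtain ⟨M, hM, hMM⟩ := exists_inS_graphJoin_sigmaGraph_mul_self_eq_one (G := G) (H := H)
    (μ := fun j ↦ a * lam j + b) (fun j ↦ (hab j).1)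
    (ρ := fun i (p : Σ j, Fin (V j i)) ↦ p.1) (ρ' := fun s (q : Σ j, Fin (W j s)) ↦ q.1)
    (fun i ↦ by simpa [eigenvalueMultiset_eq_map] using (hG i).affine ha b)
    (fun s ↦ by
      simpa [eigenvalueMultiset_eq_map, add_comm] using (hH s).affine (neg_ne_zero.mpr ha) (-b))
    (fun j hj ↦ by
      simpa only [card_sigma_sigma_fin_fiber] using hrow j ((hab j).2.mp hj))
    (fun i s ↦ by
      obtain ⟨j, hj, hV, hW⟩ := hcommon i s
      exact ⟨⟨j, ⟨0, hV.bot_lt⟩⟩, ⟨j, ⟨0, hW.bot_lt⟩⟩, rfl, (hab j).2.mpr hj⟩)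
  obtain ⟨j, -, hV, hW⟩ := hcommon i₀ s₀
  obtain ⟨x⟩ := (hG i₀).nonempty (mem_eigenvalueMultiset (t := j) hV lam)
  obtain ⟨y⟩ := (hH s₀).nonempty (mem_eigenvalueMultiset (t := j) hW lam)
  have hxy : (graphJoin (sigmaGraph G) (sigmaGraph H)).Adj (.inl ⟨i₀, x⟩) (.inr ⟨s₀, y⟩) :=
    .inr (.inr (.inl ⟨_, trivial, _, rfl, rfl⟩))
  exact qGraph_eq_two_of_mul_self_eq_one hxy hM hMM

end Compatibility

/-- Corollary 3.3: if there exist compatible 0-1 matrices `V` and `W` that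
fit `G` and `H` respectively, then `q(G ∨ H) = 2`. -/
theorem statement7 (k l : ℕ) (hk : 1 ≤ k) (hl : 1 ≤ l)
    (m : Fin k → ℕ) (p : Fin l → ℕ)
    (G : ∀ i, SimpleGraph (Fin (m i))) (H : ∀ j, SimpleGraph (Fin (p j)))
    (hG : ∀ i, (G i).Connected) (hH : ∀ j, (H j).Connected)
    (r : ℕ) (hr : 3 ≤ r)
    (V : Fin r → Fin k → ℕ) (W : Fin r → Fin l → ℕ)
    (hV01 : ∀ j i, V j i = 0 ∨ V j i = 1)
    (hW01 : ∀ j i, W j i = 0 ∨ W j i = 1)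
    (hVfit : ∀ i, (∑ j, V j i) = m i)
    (hWfit : ∀ i, (∑ j, W j i) = p i)
    (hcomp : Compatible V W) :
    qGraph (graphJoin (sigmaGraph G) (sigmaGraph H)) = 2 := by
  have hcast : StrictMono fun j : Fin r ↦ (j : ℝ) := fun _ _ h ↦ Nat.cast_lt.mpr h
  exact statement7_general hk hl G H hcomp hcast
    (fun i ↦ genericallyRealisable_eigenvalueMultiset_of_connected (hG i)
      (fun j ↦ Nat.le_one_iff_eq_zero_or_eq_one.mpr (hV01 j i)) (by simp [hVfit]) hcast.injective)
    (fun s ↦ genericallyRealisable_eigenvalueMultiset_of_connected (hH s)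
      (fun j ↦ Nat.le_one_iff_eq_zero_or_eq_one.mpr (hW01 j s)) (by simp [hWfit]) hcast.injective)
end

section
/- Let k ∈ ℕ, let m₁,…,m_k ∈ ℕ, and for each i ∈ {1,…,k} let H_i be a connected simple graph with m_i + 2 ≥ |H_i|. Then q( (K_{m₁} ∪ … ∪ K_{m_k}) ∨ (H₁ ∪ … ∪ H_k) ) = 2. -/
open Matrix Filter

/-!
Take `C i` in `S(H i)` with extreme eigenvalues `1` and `-1`, whose kernel consists of the constant
vectors: a Laplacian in which the weight of one edge is changed until the two ends of the spectrum
balance. As at most `|H i| - 2 ≤ m i` eigenvalues of `C i` lie strictly between `-1` and `1`, there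
is room for a dilation of `C i` to a symmetric involution `[[A i, B i], [(B i)ᵀ, C i]]`, and
conjugating `A i` by a generic Householder reflection removes its zeros and those of `B i`.
In the direct sum of these involutions the blocks joining `K_{m_i}` to `H j` with `i ≠ j` still
vanish. Conjugating by an orthogonal matrix that mixes the kernel vectors of the `C i` among
themselves leaves the `C i` alone and fills those blocks.
-/

section Householder

variable {n K : Type*} [Fintype n] [DecidableEq n] [Field K]

/-- The Householder reflection in the hyperplane orthogonal to `w`. When `w ⬝ᵥ w = 0` the
convention `2 / 0 = 0` makes it the identity matrix. -/
def householder (w : n → K) : Matrix n n K :=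
  1 - (2 / (w ⬝ᵥ w)) • vecMulVec w w

lemma householder_transpose (w : n → K) : (householder w)ᵀ = householder w := by
  simp [householder, transpose_sub, transpose_vecMulVec]

lemma householder_mul_self_s9 (w : n → K) : householder w * householder w = 1 := by
  have hcoeff : 2 / (w ⬝ᵥ w) * (2 / (w ⬝ᵥ w)) * (w ⬝ᵥ w) = 2 * (2 / (w ⬝ᵥ w)) := by
    rcases eq_or_ne (w ⬝ᵥ w) 0 with h | h
    · simp [h]
    · field_simp
  have hsq : ((2 / (w ⬝ᵥ w)) • vecMulVec w w) * ((2 / (w ⬝ᵥ w)) • vecMulVec w w) =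
      (2 * (2 / (w ⬝ᵥ w))) • vecMulVec w w := by
    rw [smul_mul_smul_comm, vecMulVec_mul_vecMulVec, vecMulVec_smul, smul_smul, hcoeff]
  rw [householder, sub_mul, mul_sub, mul_sub, hsq, two_mul, add_smul]
  simp

lemma householder_mulVec_apply (w y : n → K) (a : n) :
    (householder w *ᵥ y) a = y a - 2 / (w ⬝ᵥ w) * (w ⬝ᵥ y) * w a := by
  simp [householder, sub_mulVec, smul_mulVec, vecMulVec_mulVec, mul_assoc]

lemma householder_mul_diagonal_mul_householder_apply (w α : n → K) {a b : n} (hab : a ≠ b) :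
    (householder w * diagonal α * householder w) a b =
      2 * w a * w b / (w ⬝ᵥ w) ^ 2 *
        (2 * ∑ c, α c * w c ^ 2 - (α a + α b) * (w ⬝ᵥ w)) := by
  have hα : w ⬝ᵥ (diagonal α *ᵥ w) = ∑ c, α c * w c ^ 2 := by
    simp only [dotProduct, mulVec_diagonal, sq, mul_left_comm]
  have hexpand : householder w * diagonal α * householder w =
      diagonal α - (2 / (w ⬝ᵥ w)) • vecMulVec w (w ᵥ* diagonal α) -
        (2 / (w ⬝ᵥ w)) • vecMulVec (diagonal α *ᵥ w) w +
        (2 / (w ⬝ᵥ w) * (2 / (w ⬝ᵥ w)) * ∑ c, α c * w c ^ 2) • vecMulVec w w := by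
    rw [← hα, householder, sub_mul, mul_sub, sub_mul, mul_one, one_mul,
      Matrix.smul_mul, vecMulVec_mul, Matrix.mul_smul, mul_vecMulVec, sub_mulVec, smul_mulVec,
      vecMulVec_mulVec, ← dotProduct_mulVec, mul_one]
    ext x y
    simp only [op_smul_eq_smul, Matrix.sub_apply, Matrix.smul_apply, vecMulVec_apply, smul_eq_mul,
      Pi.sub_apply, Pi.smul_apply, Matrix.add_apply]
    ring
  rw [hexpand]
  simp only [Matrix.add_apply, Matrix.sub_apply, Matrix.smul_apply, vecMulVec_apply,
    diagonal_apply_ne _ hab, vecMul_diagonal, mulVec_diagonal, smul_eq_mul]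
  rcases eq_or_ne (w ⬝ᵥ w) 0 with h | h
  · simp [h]
  · field_simp
    ring

end Householder

section GenericVector

open MvPolynomial

lemma exists_forall_eval_ne_zero {σ κ R : Type*} [Finite κ] [CommRing R] [IsDomain R]
    [Infinite R] (f : κ → MvPolynomial σ R) (hf : ∀ k, f k ≠ 0) :
    ∃ w : σ → R, ∀ k, eval w (f k) ≠ 0 := by
  have := Fintype.ofFinite κ
  have hprod : ∏ k, f k ≠ 0 := Finset.prod_ne_zero_iff.2 fun k _ => hf k
  obtain ⟨w, hw⟩ : ∃ w, eval w (∏ k, f k) ≠ 0 := by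
    by_contra! h
    exact hprod (MvPolynomial.funext fun w => by rw [h w, map_zero])
  rw [map_prod, Finset.prod_ne_zero_iff] at hw
  exact ⟨w, fun k => hw k (Finset.mem_univ k)⟩

variable {n K : Type*} [Fintype n] [Field K]

lemma exists_householder_mulVec_numerator_ne_zero [NeZero (2 : K)] {y : n → K} (hy : y ≠ 0)
    (a : n) : ∃ w : n → K, (w ⬝ᵥ w) * y a - 2 * w a * (w ⬝ᵥ y) ≠ 0 := by
  classical
  by_cases ha : y a = 0
  · obtain ⟨c, hc⟩ := Function.ne_iff.1 hy
    have hca : c ≠ a := fun h => hc (h ▸ ha)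
    refine ⟨Pi.single a 1 + Pi.single c 1, ?_⟩
    simpa [ha, hca, hca.symm, two_ne_zero] using hc
  · refine ⟨Pi.single a 1, ?_⟩
    rw [show (Pi.single a (1 : K) ⬝ᵥ Pi.single a 1) * y a -
      2 * (Pi.single a (1 : K) : n → K) a * (Pi.single a 1 ⬝ᵥ y) = -y a by simp; ring]
    exact neg_ne_zero.2 ha

lemma exists_householder_conj_numerator_ne_zero [NeZero (2 : K)] {α : n → K}
    (hα : ∃ a b, α a ≠ α b) (a b : n) :
    ∃ w : n → K, 2 * ∑ c, α c * w c ^ 2 - (α a + α b) * (w ⬝ᵥ w) ≠ 0 := by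
  classical
  obtain ⟨c, hc⟩ : ∃ c, 2 * α c - (α a + α b) ≠ 0 := by
    by_contra! h
    obtain ⟨c, d, hcd⟩ := hα
    exact hcd (mul_left_cancel₀ (two_ne_zero (α := K)) (sub_left_inj.1 ((h c).trans (h d).symm)))
  exact ⟨Pi.single c 1, by simpa [Pi.single_apply] using hc⟩

theorem exists_householder_generic [DecidableEq n] {κ : Type*} [Finite κ] [Infinite K]
    [NeZero (2 : K)] (α : n → K) (hα : Nontrivial n → ∃ a b, α a ≠ α b) (Y : κ → n → K)
    (hY : ∀ k, Y k ≠ 0) :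
    ∃ w : n → K, (∀ k a, (householder w *ᵥ Y k) a ≠ 0) ∧
      ∀ a b, a ≠ b → (householder w * diagonal α * householder w) a b ≠ 0 := by
  let normSq : MvPolynomial n K := ∑ c, X c * X c
  let f : n ⊕ κ × n ⊕ {x : n × n // x.1 ≠ x.2} → MvPolynomial n K :=
    Sum.elim (fun a => X a * normSq) <| Sum.elim
      (fun x => normSq * C (Y x.1 x.2) - 2 * X x.2 * ∑ c, X c * C (Y x.1 c))
      (fun x => 2 * ∑ c, C (α c) * X c ^ 2 - C (α x.1.1 + α x.1.2) * normSq)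
  have hf : ∀ s, f s ≠ 0 := by
    have ne_zero_of_eval : ∀ s, (∃ w, eval w (f s) ≠ 0) → f s ≠ 0 := by
      rintro s ⟨w, hw⟩ h
      exact hw (by rw [h, map_zero])
    refine fun s => ne_zero_of_eval s ?_
    rcases s with a | ⟨k, a⟩ | ⟨⟨a, b⟩, hab⟩
    · exact ⟨Pi.single a 1, by simp [f, normSq, Pi.single_apply]⟩
    · simpa [f, normSq, dotProduct] using exists_householder_mulVec_numerator_ne_zero (hY k) a
    · simpa [f, normSq, dotProduct] using
        exists_householder_conj_numerator_ne_zero (hα ⟨a, b, hab⟩) a b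
  obtain ⟨w, hw⟩ := exists_forall_eval_ne_zero f hf
  have hw₁ : ∀ a, w a ≠ 0 ∧ w ⬝ᵥ w ≠ 0 := fun a => by
    simpa [f, normSq, dotProduct] using hw (.inl a)
  have hw₂ : ∀ k a, (w ⬝ᵥ w) * Y k a - 2 * w a * (w ⬝ᵥ Y k) ≠ 0 := fun k a => by
    simpa [f, normSq, dotProduct] using hw (.inr (.inl (k, a)))
  have hw₃ : ∀ a b, a ≠ b → 2 * ∑ c, α c * w c ^ 2 - (α a + α b) * (w ⬝ᵥ w) ≠ 0 :=
    fun a b hab => by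
      simpa [f, normSq, dotProduct] using hw (.inr (.inr ⟨(a, b), hab⟩))
  refine ⟨w, fun k a => ?_, fun a b hab => ?_⟩
  · rw [householder_mulVec_apply]
    have := (hw₁ a).2
    convert div_ne_zero (hw₂ k a) this using 1
    field_simp
  · rw [householder_mul_diagonal_mul_householder_apply _ _ hab]
    exact mul_ne_zero (div_ne_zero (mul_ne_zero (mul_ne_zero two_ne_zero (hw₁ a).1) (hw₁ b).1)
      (pow_ne_zero 2 (hw₁ a).2)) (hw₃ a b hab)

end GenericVector

section Graphs

variable {α β ι : Type*}

lemma graphJoin_adj_inl_inl {G₁ : SimpleGraph α} {G₂ : SimpleGraph β} {a b : α} :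
    (graphJoin G₁ G₂).Adj (.inl a) (.inl b) ↔ G₁.Adj a b := by
  simp [graphJoin, partialJoin]

lemma graphJoin_adj_inr_inr {G₁ : SimpleGraph α} {G₂ : SimpleGraph β} {a b : β} :
    (graphJoin G₁ G₂).Adj (.inr a) (.inr b) ↔ G₂.Adj a b := by
  simp [graphJoin, partialJoin]

lemma graphJoin_adj_inl_inr (G₁ : SimpleGraph α) (G₂ : SimpleGraph β) (a : α) (b : β) :
    (graphJoin G₁ G₂).Adj (.inl a) (.inr b) := by
  simp [graphJoin, partialJoin]

variable {γ : ι → Type*}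

lemma sigmaGraph_adj_mk_mk {G : ∀ i, SimpleGraph (γ i)} {i : ι} {a b : γ i} :
    (sigmaGraph G).Adj ⟨i, a⟩ ⟨i, b⟩ ↔ (G i).Adj a b := by
  constructor
  · rintro ⟨_, _, _, h, ⟨⟩, ⟨⟩⟩
    exact h
  · exact fun h => ⟨i, a, b, h, rfl, rfl⟩

lemma fst_eq_of_sigmaGraph_adj {G : ∀ i, SimpleGraph (γ i)} {x y : Σ i, γ i}
    (h : (sigmaGraph G).Adj x y) : x.1 = y.1 := by
  obtain ⟨i, a, b, -, rfl, rfl⟩ := h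
  rfl

lemma inS_blockDiagonal' [DecidableEq ι] {G : ∀ i, SimpleGraph (γ i)}
    {M : ∀ i, Matrix (γ i) (γ i) ℝ} (hM : ∀ i, inS (G i) (M i)) :
    inS (sigmaGraph G) (blockDiagonal' M) := by
  refine ⟨?_, ?_⟩
  · rw [Matrix.IsSymm, blockDiagonal'_transpose]
    exact congrArg blockDiagonal' (funext fun i => (hM i).1)
  · rintro ⟨i, a⟩ ⟨j, b⟩ hne
    rcases eq_or_ne i j with rfl | hij
    · rw [blockDiagonal'_apply_eq, sigmaGraph_adj_mk_mk]
      exact (hM i).2 a b fun h => hne (h ▸ rfl)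
    · rw [blockDiagonal'_apply_ne _ _ _ hij]
      exact iff_of_false (fun h => h rfl) fun h => hij (fst_eq_of_sigmaGraph_adj h)

lemma inS_graphJoin_fromBlocks {G₁ : SimpleGraph α} {G₂ : SimpleGraph β} {A : Matrix α α ℝ}
    {B : Matrix α β ℝ} {C : Matrix β β ℝ} (hA : inS G₁ A) (hC : inS G₂ C)
    (hB : ∀ a b, B a b ≠ 0) : inS (graphJoin G₁ G₂) (fromBlocks A B Bᵀ C) := by
  refine ⟨IsSymm.fromBlocks hA.1 rfl hC.1, ?_⟩
  rintro (a | a) (b | b) hne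
  · rw [graphJoin_adj_inl_inl, fromBlocks_apply₁₁]
    exact hA.2 a b fun h => hne (h ▸ rfl)
  · exact iff_of_true (hB a b) (graphJoin_adj_inl_inr G₁ G₂ a b)
  · exact iff_of_true (hB b a) (graphJoin_adj_inl_inr G₁ G₂ b a).symm
  · rw [graphJoin_adj_inr_inr, fromBlocks_apply₂₂]
    exact hC.2 a b fun h => hne (h ▸ rfl)

lemma inS_smul {G : SimpleGraph α} {A : Matrix α α ℝ} (hA : inS G A) {c : ℝ} (hc : c ≠ 0) :
    inS G (c • A) :=
  ⟨hA.1.smul c, fun i j hij => by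
    rw [Matrix.smul_apply, smul_ne_zero_iff_right hc, hA.2 i j hij]⟩

lemma inS_top_iff {A : Matrix α α ℝ} :
    inS ⊤ A ↔ A.IsSymm ∧ ∀ a b, a ≠ b → A a b ≠ 0 :=
  and_congr_right fun _ => forall₃_congr fun _ _ hab => by simp [hab]

end Graphs

section DistinctEigenvalues

variable {V : Type*} [Fintype V] [DecidableEq V]

lemma isHermitian_eq_smul_one {A : Matrix V V ℝ} (hA : A.IsHermitian) {c : ℝ}
    (hc : ∀ i, hA.eigenvalues i = c) : A = c • 1 := by
  have hdiag : diagonal ((RCLike.ofReal : ℝ → ℝ) ∘ hA.eigenvalues) = c • (1 : Matrix V V ℝ) := by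
    rw [smul_one_eq_diagonal]
    exact congrArg diagonal (funext hc)
  rw [hA.spectral_theorem, hdiag, map_smul, map_one]

lemma two_le_qMat_s9 {G : SimpleGraph V} {A : Matrix V V ℝ} (hA : inS G A) {a b : V}
    (hab : G.Adj a b) : 2 ≤ qMat A := by
  by_contra! hlt
  have hherm := isHermitian_iff_isSymm.2 hA.1
  have heq : ∀ i, hherm.eigenvalues i = hherm.eigenvalues a := by
    have hmem : ∀ i, hherm.eigenvalues i ∈ (specMultiset A).toFinset := fun i => by
      simp [specMultiset, hherm.roots_charpoly_eq_eigenvalues]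
    exact fun i => Finset.card_le_one.1 (Nat.le_of_lt_succ hlt) _ (hmem i) _ (hmem a)
  refine (hA.2 a b hab.ne).2 hab ?_
  rw [isHermitian_eq_smul_one hherm heq, Matrix.smul_apply, one_apply_ne hab.ne, smul_zero]

lemma qMat_le_two {A : Matrix V V ℝ} (hA : A * A = 1) : qMat A ≤ 2 := by
  have hroots : (specMultiset A).toFinset ⊆ {1, -1} := fun x hx => by
    have hspec : x ∈ spectrum ℝ A :=
      mem_spectrum_iff_isRoot_charpoly.2
        (Polynomial.isRoot_of_mem_roots (Multiset.mem_toFinset.1 hx))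
    have : Nontrivial (Matrix V V ℝ) := not_subsingleton_iff_nontrivial.1 fun _ => by
      simp [spectrum.of_subsingleton] at hspec
    have hsq := spectrum.pow_mem_pow A 2 hspec
    rw [sq A, hA, spectrum.one_eq, Set.mem_singleton_iff] at hsq
    rw [Finset.mem_insert, Finset.mem_singleton]
    exact sq_eq_one_iff.1 hsq
  exact (Finset.card_le_card hroots).trans Finset.card_le_two

theorem qGraph_eq_two {G : SimpleGraph V} {a b : V} (hab : G.Adj a b) {A : Matrix V V ℝ}
    (hA : inS G A) (hAA : A * A = 1) : qGraph G = 2 := by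
  have hq : qMat A = 2 := le_antisymm (qMat_le_two hAA) (two_le_qMat_s9 hA hab)
  refine le_antisymm (Nat.sInf_le ⟨A, hA, hq⟩) (le_csInf ⟨2, A, hA, hq⟩ ?_)
  rintro _ ⟨A', hA', rfl⟩
  exact two_le_qMat_s9 hA' hab

end DistinctEigenvalues

section BlockInvolution

lemma matrix_mul_mul_cancel_left {l m n R : Type*} [Fintype m] [Fintype n] [DecidableEq n]
    [CommRing R] {M : Matrix n m R} {N : Matrix m n R} (h : M * N = 1) (X : Matrix n l R) :
    M * (N * X) = X := by
  rw [← Matrix.mul_assoc, h, Matrix.one_mul]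

variable {α β R : Type*} [Fintype α] [DecidableEq α] [Fintype β] [DecidableEq β] [CommRing R]

/-- The symmetric block matrix `[[A, B], [Bᵀ, C]]` squares to the identity. The lower left block
of the square is the transpose of the upper right one, so three equations suffice. -/
structure IsBlockInvolution (A : Matrix α α R) (B : Matrix α β R) (C : Matrix β β R) : Prop where
  isSymm_left : A.IsSymm
  isSymm_right : C.IsSymm
  left : A * A + B * Bᵀ = 1
  cross : A * B + B * C = 0
  right : Bᵀ * B + C * C = 1

namespace IsBlockInvolution

variable {A : Matrix α α R} {B : Matrix α β R} {C : Matrix β β R}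

lemma fromBlocks_mul_self (h : IsBlockInvolution A B C) :
    fromBlocks A B Bᵀ C * fromBlocks A B Bᵀ C = 1 := by
  have hcross : Bᵀ * A + C * Bᵀ = 0 := by
    simpa only [transpose_add, transpose_mul, h.isSymm_left.eq, h.isSymm_right.eq,
      transpose_zero] using congrArg transpose h.cross
  rw [fromBlocks_multiply, h.left, h.cross, hcross, h.right, fromBlocks_one]

lemma conj (h : IsBlockInvolution A B C) {U : Matrix α α R} {V : Matrix β β R}
    (hU : Uᵀ * U = 1) (hV : Vᵀ * V = 1) :
    IsBlockInvolution (U * A * Uᵀ) (U * B * Vᵀ) (V * C * Vᵀ) := by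
  refine ⟨?_, ?_, ?_, ?_, ?_⟩
  · simp only [Matrix.IsSymm, transpose_mul, transpose_transpose, h.isSymm_left.eq,
      Matrix.mul_assoc]
  · simp only [Matrix.IsSymm, transpose_mul, transpose_transpose, h.isSymm_right.eq,
      Matrix.mul_assoc]
  · calc U * A * Uᵀ * (U * A * Uᵀ) + U * B * Vᵀ * (U * B * Vᵀ)ᵀ
        = U * (A * A + B * Bᵀ) * Uᵀ := by
          simp only [transpose_mul, transpose_transpose, Matrix.mul_assoc,
            matrix_mul_mul_cancel_left hU, matrix_mul_mul_cancel_left hV, Matrix.mul_add,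
            Matrix.add_mul]
      _ = 1 := by rw [h.left, Matrix.mul_one, mul_eq_one_comm.1 hU]
  · calc U * A * Uᵀ * (U * B * Vᵀ) + U * B * Vᵀ * (V * C * Vᵀ)
        = U * (A * B + B * C) * Vᵀ := by
          simp only [Matrix.mul_assoc, matrix_mul_mul_cancel_left hU,
            matrix_mul_mul_cancel_left hV, Matrix.mul_add, Matrix.add_mul]
      _ = 0 := by rw [h.cross, Matrix.mul_zero, Matrix.zero_mul]
  · calc (U * B * Vᵀ)ᵀ * (U * B * Vᵀ) + V * C * Vᵀ * (V * C * Vᵀ)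
        = V * (Bᵀ * B + C * C) * Vᵀ := by
          simp only [transpose_mul, transpose_transpose, Matrix.mul_assoc,
            matrix_mul_mul_cancel_left hU, matrix_mul_mul_cancel_left hV, Matrix.mul_add,
            Matrix.add_mul]
      _ = 1 := by rw [h.right, Matrix.mul_one, mul_eq_one_comm.1 hV]

lemma transpose_mulVec_mulVec (h : IsBlockInvolution A B C) {v : β → R} (hv : C *ᵥ v = 0) :
    Bᵀ *ᵥ (B *ᵥ v) = v := by
  have := congrArg (· *ᵥ v) h.right
  simpa [add_mulVec, ← mulVec_mulVec, hv] using this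

lemma mulVec_ne_zero (h : IsBlockInvolution A B C) {v y : β → R} (hv : C *ᵥ v = 0)
    (hvy : v ⬝ᵥ y ≠ 0) : B *ᵥ y ≠ 0 := fun h0 => hvy <| by
  rw [← h.transpose_mulVec_mulVec hv, mulVec_transpose, ← dotProduct_mulVec, h0, dotProduct_zero]

lemma mulVec_mulVec_eq_zero (h : IsBlockInvolution A B C) {v : β → R} (hv : C *ᵥ v = 0) :
    A *ᵥ (B *ᵥ v) = 0 := by
  have := congrArg (· *ᵥ v) h.cross
  simpa [add_mulVec, ← mulVec_mulVec, hv] using this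

lemma blockDiagonal' {ι : Type*} [Fintype ι] [DecidableEq ι] {α β : ι → Type*}
    [∀ i, Fintype (α i)] [∀ i, DecidableEq (α i)] [∀ i, Fintype (β i)] [∀ i, DecidableEq (β i)]
    {A : ∀ i, Matrix (α i) (α i) R} {B : ∀ i, Matrix (α i) (β i) R}
    {C : ∀ i, Matrix (β i) (β i) R} (h : ∀ i, IsBlockInvolution (A i) (B i) (C i)) :
    IsBlockInvolution (Matrix.blockDiagonal' A) (Matrix.blockDiagonal' B)
      (Matrix.blockDiagonal' C) where
  isSymm_left := by
    rw [Matrix.IsSymm, blockDiagonal'_transpose]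
    exact congrArg _ (funext fun i => (h i).isSymm_left)
  isSymm_right := by
    rw [Matrix.IsSymm, blockDiagonal'_transpose]
    exact congrArg _ (funext fun i => (h i).isSymm_right)
  left := by
    rw [blockDiagonal'_transpose, ← blockDiagonal'_mul, ← blockDiagonal'_mul,
      ← blockDiagonal'_add, ← blockDiagonal'_one]
    exact congrArg _ (funext fun i => (h i).left)
  cross := by
    rw [← blockDiagonal'_mul, ← blockDiagonal'_mul, ← blockDiagonal'_add, ← blockDiagonal'_zero]
    exact congrArg _ (funext fun i => (h i).cross)
  right := by
    rw [blockDiagonal'_transpose, ← blockDiagonal'_mul, ← blockDiagonal'_mul,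
      ← blockDiagonal'_add, ← blockDiagonal'_one]
    exact congrArg _ (funext fun i => (h i).right)

end IsBlockInvolution

end BlockInvolution

section EmbeddedDiagonal

variable {ι n R : Type*} [DecidableEq n] [CommRing R] {s : n → R}

/-- The matrix whose row `g j` is zero except for the entry `s j` in column `j`, and whose rows
outside the range of `g` vanish: a diagonal matrix with its nonzero rows permuted along `g`. -/
noncomputable def embeddedDiagonal (s : n → R) (g : {j // s j ≠ 0} ↪ ι) : Matrix ι n R :=
  Function.extend g (fun j => Pi.single j.1 (s j)) 0

lemma embeddedDiagonal_apply_embedding (g : {j // s j ≠ 0} ↪ ι) (j : {j // s j ≠ 0}) :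
    embeddedDiagonal s g (g j) = Pi.single j.1 (s j) :=
  g.injective.extend_apply _ _ j

lemma embeddedDiagonal_apply_of_not_exists (g : {j // s j ≠ 0} ↪ ι) {a : ι}
    (ha : ¬ ∃ j, g j = a) : embeddedDiagonal s g a = 0 :=
  Function.extend_apply' _ _ a ha

lemma embeddedDiagonal_transpose_mul_self [Fintype ι] (g : {j // s j ≠ 0} ↪ ι) :
    (embeddedDiagonal s g)ᵀ * embeddedDiagonal s g = diagonal fun j => s j * s j := by
  classical
  have := Fintype.ofInjective g g.injective
  ext j l
  simp only [Matrix.mul_apply, transpose_apply]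
  rw [← Fintype.sum_of_injective g g.injective
      (fun t => embeddedDiagonal s g (g t) j * embeddedDiagonal s g (g t) l) _
      (fun a ha => by simp [embeddedDiagonal_apply_of_not_exists g ha]) fun _ => rfl]
  simp only [embeddedDiagonal_apply_embedding]
  by_cases hj : s j = 0
  · have hne : ∀ t : {j // s j ≠ 0}, j ≠ t := fun t h => t.2 (h ▸ hj)
    simp [hne, diagonal_apply, hj]
  · rw [Fintype.sum_eq_single ⟨j, hj⟩ fun t ht => by
      simp [show j ≠ t from fun h => ht (Subtype.ext h.symm)]]
    rcases eq_or_ne j l with rfl | hjl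
    · simp
    · simp [hjl, hjl.symm]

lemma exists_isBlockInvolution_diagonal_of_embedding [Fintype ι] [DecidableEq ι] [Fintype n]
    {d : n → R} (hs : ∀ j, s j * s j + d j * d j = 1) (g : {j // s j ≠ 0} ↪ ι) :
    ∃ (α : ι → R) (B : Matrix ι n R), IsBlockInvolution (diagonal α) B (diagonal d) := by
  let α : ι → R := Function.extend g (fun j => -d j) 1
  let B := embeddedDiagonal s g
  have α_apply : ∀ j, α (g j) = -d j := fun j => g.injective.extend_apply _ _ j
  have B_apply : ∀ j, B (g j) = Pi.single j.1 (s j) := embeddedDiagonal_apply_embedding g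
  have α_apply' : ∀ a, (¬ ∃ j, g j = a) → α a = 1 := fun a ha => Function.extend_apply' _ _ a ha
  have B_apply' : ∀ a, (¬ ∃ j, g j = a) → B a = 0 := fun a ha =>
    embeddedDiagonal_apply_of_not_exists g ha
  refine ⟨α, B, isSymm_diagonal α, isSymm_diagonal d, ?_, ?_, ?_⟩
  · ext a b
    rw [Matrix.add_apply, diagonal_mul_diagonal, diagonal_apply, one_apply]
    change _ + B a ⬝ᵥ B b = _
    rcases em (∃ j, g j = a) with ⟨j, rfl⟩ | ha
    · rw [B_apply, single_dotProduct]
      rcases em (∃ l, g l = b) with ⟨l, rfl⟩ | hb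
      · rcases eq_or_ne j l with rfl | hjl
        · simp [B_apply, α_apply, ← hs j, add_comm]
        · simp [B_apply, hjl, Subtype.coe_injective.ne hjl]
      · simp [B_apply' b hb, show g j ≠ b from fun h => hb ⟨j, h⟩]
    · simp [B_apply' a ha, α_apply' a ha]
  · ext a j
    rw [Matrix.add_apply, diagonal_mul, mul_diagonal]
    rcases em (∃ l, g l = a) with ⟨l, rfl⟩ | ha
    · rcases eq_or_ne j l with rfl | hjl
      · simp [α_apply, mul_comm]
      · simp [B_apply, hjl]
    · simp [B_apply' a ha]
  · rw [embeddedDiagonal_transpose_mul_self, diagonal_mul_diagonal, diagonal_add, ← diagonal_one]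
    exact congrArg diagonal (funext hs)

end EmbeddedDiagonal

theorem exists_isBlockInvolution_diagonal {ι n : Type*} [Fintype ι] [DecidableEq ι] [Fintype n]
    [DecidableEq n] {C : Matrix n n ℝ} (hC : C.IsHermitian)
    (hle : ∀ j, |hC.eigenvalues j| ≤ 1)
    (hcard : Fintype.card {j // |hC.eigenvalues j| < 1} ≤ Fintype.card ι) :
    ∃ (α : ι → ℝ) (B : Matrix ι n ℝ), IsBlockInvolution (diagonal α) B C := by
  set d := hC.eigenvalues
  have hsqrt : ∀ j, √(1 - d j * d j) * √(1 - d j * d j) + d j * d j = 1 := fun j => by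
    have : d j * d j ≤ 1 := by
      rw [← sq]
      exact (sq_le_one_iff_abs_le_one _).2 (hle j)
    rw [Real.mul_self_sqrt (sub_nonneg.2 this), sub_add_cancel]
  have hlt : ∀ j, √(1 - d j * d j) ≠ 0 → |d j| < 1 := fun j hj =>
    (hle j).lt_of_ne fun h => hj (by rw [← abs_mul_abs_self, h, mul_one, sub_self, Real.sqrt_zero])
  obtain ⟨g⟩ := Function.Embedding.nonempty_of_card_le hcard
  obtain ⟨α, B, h⟩ := exists_isBlockInvolution_diagonal_of_embedding hsqrt
    ((Subtype.impEmbedding _ _ hlt).trans g)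
  have hV := Unitary.coe_star_mul_self hC.eigenvectorUnitary
  have hspec := hC.spectral_theorem
  rw [Unitary.conjStarAlgAut_apply] at hspec
  rw [star_eq_conjTranspose, conjTranspose_eq_transpose_of_trivial] at hV hspec
  refine ⟨α, B * (hC.eigenvectorUnitary : Matrix n n ℝ)ᵀ, ?_⟩
  have hconj := h.conj (U := 1) (by simp) hV
  rw [← show C = _ * diagonal d * _ from hspec] at hconj
  simpa using hconj

section Rayleigh

variable {n : Type*} [Fintype n]

/-- The maximum of the quadratic form of `C` on the unit sphere. For symmetric `C` it is the
largest eigenvalue of `C`, and `-rayleighMax (-C)` is the smallest one. -/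
noncomputable def rayleighMax (C : Matrix n n ℝ) : ℝ :=
  sSup ((fun x => x ⬝ᵥ C *ᵥ x) '' {x | x ⬝ᵥ x = 1})

lemma isCompact_setOf_dotProduct_self_eq_one : IsCompact {x : n → ℝ | x ⬝ᵥ x = 1} := by
  refine Metric.isCompact_of_isClosed_isBounded
    (isClosed_eq (continuous_id.dotProduct continuous_id) continuous_const)
    (Metric.isBounded_closedBall (x := 0) (r := 1) |>.subset fun x hx => ?_)
  rw [mem_closedBall_zero_iff, pi_norm_le_iff_of_nonneg zero_le_one]
  intro i
  have : x i * x i ≤ x ⬝ᵥ x :=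
    Finset.single_le_sum (fun j _ => mul_self_nonneg (x j)) (Finset.mem_univ i)
  rw [Real.norm_eq_abs, ← sq_le_one_iff_abs_le_one, sq]
  exact this.trans_eq hx

lemma le_rayleighMax (C : Matrix n n ℝ) {x : n → ℝ} (hx : x ⬝ᵥ x = 1) :
    x ⬝ᵥ C *ᵥ x ≤ rayleighMax C :=
  le_csSup (isCompact_setOf_dotProduct_self_eq_one.bddAbove_image (by fun_prop))
    (Set.mem_image_of_mem _ hx)

lemma dotProduct_mulVec_le_rayleighMax_mul (C : Matrix n n ℝ) (x : n → ℝ) :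
    x ⬝ᵥ C *ᵥ x ≤ rayleighMax C * (x ⬝ᵥ x) := by
  rcases eq_or_ne x 0 with rfl | hx
  · simp
  · have hpos : 0 < x ⬝ᵥ x := dotProduct_self_star_pos_iff.2 hx
    have hs : √(x ⬝ᵥ x) * √(x ⬝ᵥ x) = x ⬝ᵥ x := Real.mul_self_sqrt hpos.le
    have := le_rayleighMax C (x := (√(x ⬝ᵥ x))⁻¹ • x) (by
      rw [smul_dotProduct, dotProduct_smul, smul_smul, smul_eq_mul, ← mul_inv, hs,
        inv_mul_cancel₀ hpos.ne'])
    rw [mulVec_smul, smul_dotProduct, dotProduct_smul, smul_smul, smul_eq_mul, ← mul_inv, hs,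
      inv_mul_le_iff₀ hpos] at this
    linarith

lemma apply_self_le_rayleighMax (C : Matrix n n ℝ) (i : n) :
    C i i ≤ rayleighMax C := by
  classical
  simpa using le_rayleighMax C (x := Pi.single i 1) (by simp)

lemma exists_eq_rayleighMax [Nonempty n] (C : Matrix n n ℝ) :
    ∃ x : n → ℝ, x ⬝ᵥ x = 1 ∧ x ⬝ᵥ C *ᵥ x = rayleighMax C := by
  classical
  obtain ⟨x, hx, h⟩ := isCompact_setOf_dotProduct_self_eq_one.exists_sSup_image_eq
    (f := fun x : n → ℝ => x ⬝ᵥ C *ᵥ x) ⟨Pi.single (Classical.arbitrary n) 1, by simp⟩ (by fun_prop)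
  exact ⟨x, hx, h.symm⟩

lemma continuous_rayleighMax : Continuous (rayleighMax : Matrix n n ℝ → ℝ) :=
  isCompact_setOf_dotProduct_self_eq_one.continuous_sSup
    (f := fun (C : Matrix n n ℝ) x => x ⬝ᵥ C *ᵥ x) <| by
      simp only [Function.HasUncurry.uncurry]
      fun_prop

lemma rayleighMax_smul (C : Matrix n n ℝ) {c : ℝ} (hc : 0 ≤ c) :
    rayleighMax (c • C) = c * rayleighMax C := by
  rw [rayleighMax, rayleighMax, ← smul_eq_mul, ← Real.sSup_smul_of_nonneg hc, ← Set.image_smul,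
    Set.image_image]
  simp only [smul_mulVec, dotProduct_smul]

lemma rayleighMax_le_of_forall_le [Nonempty n] {C D : Matrix n n ℝ}
    (h : ∀ x, x ⬝ᵥ C *ᵥ x ≤ x ⬝ᵥ D *ᵥ x) : rayleighMax C ≤ rayleighMax D := by
  obtain ⟨x, hx, hCx⟩ := exists_eq_rayleighMax C
  exact hCx ▸ (h x).trans (le_rayleighMax D hx)

variable [DecidableEq n]

lemma le_rayleighMax_of_mem_spectrum {C : Matrix n n ℝ} (hC : C.IsHermitian) {μ : ℝ}
    (hμ : μ ∈ spectrum ℝ C) : μ ≤ rayleighMax C := by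
  rw [hC.spectrum_real_eq_range_eigenvalues] at hμ
  obtain ⟨i, rfl⟩ := hμ
  have hunit : (hC.eigenvectorBasis i : n → ℝ) ⬝ᵥ hC.eigenvectorBasis i = 1 := by
    have := hC.eigenvectorBasis.inner_eq_one i
    rwa [EuclideanSpace.inner_eq_star_dotProduct] at this
  simpa [hC.eigenvalues_eq] using le_rayleighMax C hunit

lemma rayleighMax_mem_spectrum [Nonempty n] {C : Matrix n n ℝ} (hC : C.IsHermitian) :
    rayleighMax C ∈ spectrum ℝ C := by
  obtain ⟨x, hx, hCx⟩ := exists_eq_rayleighMax C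
  have hform : ∀ y, y ⬝ᵥ (rayleighMax C • 1 - C) *ᵥ y = rayleighMax C * (y ⬝ᵥ y) - y ⬝ᵥ C *ᵥ y :=
    fun y => by simp [sub_mulVec, smul_mulVec]
  have hherm : (rayleighMax C • (1 : Matrix n n ℝ)).IsHermitian :=
    isHermitian_iff_isSymm.2 (isSymm_one.smul _)
  have hpsd : (rayleighMax C • 1 - C).PosSemidef :=
    posSemidef_iff_dotProduct_mulVec.2 ⟨hherm.sub hC, fun y => by
      simpa [hform] using dotProduct_mulVec_le_rayleighMax_mul C y⟩
  have hker : (rayleighMax C • 1 - C) *ᵥ x = 0 :=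
    (hpsd.dotProduct_mulVec_zero_iff x).1 (by simp [hform, hx, hCx])
  rw [spectrum.mem_iff, Algebra.algebraMap_eq_smul_one, ← mulVec_injective_iff_isUnit]
  intro hinj
  have : x = 0 := hinj (hker.trans (mulVec_zero _).symm)
  simp [this] at hx

theorem exists_isBlockInvolution_diagonal_of_rayleighMax {ι : Type*} [Fintype ι] [DecidableEq ι]
    [Nonempty n] {C : Matrix n n ℝ} (hC : C.IsHermitian) (hmax : rayleighMax C = 1)
    (hmin : rayleighMax (-C) = 1) (hcard : Fintype.card n ≤ Fintype.card ι + 2) :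
    ∃ (α : ι → ℝ) (B : Matrix ι n ℝ), IsBlockInvolution (diagonal α) B C := by
  have hone := hmax ▸ rayleighMax_mem_spectrum hC
  have hneg := hmin ▸ rayleighMax_mem_spectrum hC.neg
  rw [← spectrum.neg_eq, Set.mem_neg] at hneg
  rw [hC.spectrum_real_eq_range_eigenvalues] at hone hneg
  obtain ⟨i, hi⟩ := hone
  obtain ⟨j, hj⟩ := hneg
  refine exists_isBlockInvolution_diagonal hC (fun l => abs_le.2 ⟨?_, ?_⟩) ?_
  · have : -hC.eigenvalues l ∈ spectrum ℝ (-C) := by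
      rw [← spectrum.neg_eq, Set.neg_mem_neg]
      exact hC.eigenvalues_mem_spectrum_real l
    linarith [le_rayleighMax_of_mem_spectrum hC.neg this]
  · exact hmax ▸ le_rayleighMax_of_mem_spectrum hC (hC.eigenvalues_mem_spectrum_real l)
  · have hij : i ≠ j := fun h => by
      rw [h, hj] at hi
      norm_num at hi
    have hsub : Finset.univ.filter (fun l => |hC.eigenvalues l| < 1) ⊆ {i, j}ᶜ := fun l hl => by
      rw [Finset.mem_filter_univ] at hl
      simp only [Finset.mem_compl, Finset.mem_insert, Finset.mem_singleton, not_or]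
      exact ⟨fun h => by simp [h, hi] at hl, fun h => by simp [h, hj] at hl⟩
    have := Finset.card_le_card hsub
    rw [Finset.card_compl, Finset.card_pair hij] at this
    rw [Fintype.card_subtype]
    omega

end Rayleigh

section Balance

variable {n : Type*} [Fintype n]

lemma dotProduct_add_smul_vecMulVec_mulVec (P : Matrix n n ℝ) (t : ℝ) (e x : n → ℝ) :
    x ⬝ᵥ (P + t • vecMulVec e e) *ᵥ x = x ⬝ᵥ P *ᵥ x + t * (e ⬝ᵥ x) ^ 2 := by
  simp only [add_mulVec, smul_mulVec, vecMulVec_mulVec, dotProduct_add, dotProduct_smul,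
    dotProduct_comm x e, smul_eq_mul, op_smul_eq_smul]
  ring

/-- A positive semidefinite matrix is skewed to the positive side and becomes skewed to the
negative side after subtracting a large multiple of `e eᵀ`; in between it is balanced. -/
theorem exists_rayleighMax_eq_rayleighMax_neg {P : Matrix n n ℝ} (hP : P.PosSemidef)
    {e : n → ℝ} (he : e ≠ 0) :
    ∃ t : ℝ, rayleighMax (P + t • vecMulVec e e) = rayleighMax (-(P + t • vecMulVec e e)) := by
  obtain ⟨i, hi⟩ := Function.ne_iff.1 he
  have : Nonempty n := ⟨i⟩
  have hei : 0 < e i ^ 2 := sq_pos_of_ne_zero hi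
  have hP_nonneg : ∀ x, 0 ≤ x ⬝ᵥ P *ᵥ x := hP.dotProduct_mulVec_nonneg
  have hmax : 0 ≤ rayleighMax P := hP.diag_nonneg.trans (apply_self_le_rayleighMax P i)
  have hmin : rayleighMax (-P) ≤ rayleighMax P := rayleighMax_le_of_forall_le fun x => by
    rw [neg_mulVec, dotProduct_neg]
    linarith [hP_nonneg x]
  set t₀ : ℝ := -(P i i + rayleighMax P) / e i ^ 2
  have ht₀ : t₀ ≤ 0 := div_nonpos_of_nonpos_of_nonneg
    (neg_nonpos.2 (add_nonneg hP.diag_nonneg hmax)) hei.le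
  have hcont : Continuous fun t : ℝ => rayleighMax (P + t • vecMulVec e e) -
      rayleighMax (-(P + t • vecMulVec e e)) :=
    (continuous_rayleighMax.comp (by fun_prop)).sub (continuous_rayleighMax.comp (by fun_prop))
  have hneg : rayleighMax (P + t₀ • vecMulVec e e) ≤ rayleighMax P :=
    rayleighMax_le_of_forall_le fun x => by
      rw [dotProduct_add_smul_vecMulVec_mulVec]
      nlinarith [mul_nonpos_of_nonpos_of_nonneg ht₀ (sq_nonneg (e ⬝ᵥ x))]
  have hpos : rayleighMax P ≤ rayleighMax (-(P + t₀ • vecMulVec e e)) := by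
    have := apply_self_le_rayleighMax (-(P + t₀ • vecMulVec e e)) i
    rw [Matrix.neg_apply, Matrix.add_apply, Matrix.smul_apply, vecMulVec_apply, ← sq, smul_eq_mul,
      div_mul_cancel₀ _ hei.ne'] at this
    linarith
  obtain ⟨t, -, ht⟩ := intermediate_value_Icc ht₀ hcont.continuousOn
    (show (0 : ℝ) ∈ _ from ⟨by linarith, by simpa using hmin⟩)
  exact ⟨t, sub_eq_zero.1 ht⟩

end Balance

section Laplacian

variable {V : Type*} [Fintype V] [DecidableEq V]

open scoped Classical in
/-- The Laplacian of `G` in which the edge `cd` has weight `t` and all other edges have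
weight `1`. -/
noncomputable def reweightedLapMatrix (G : SimpleGraph V) (c d : V) (t : ℝ) : Matrix V V ℝ :=
  (G.deleteEdges {s(c, d)}).lapMatrix ℝ +
    t • vecMulVec (Pi.single c 1 - Pi.single d 1) (Pi.single c 1 - Pi.single d 1)

variable {G : SimpleGraph V} {c d : V} {t : ℝ}

open scoped Classical in
lemma dotProduct_reweightedLapMatrix_mulVec (x : V → ℝ) :
    x ⬝ᵥ reweightedLapMatrix G c d t *ᵥ x =
      x ⬝ᵥ (G.deleteEdges {s(c, d)}).lapMatrix ℝ *ᵥ x + t * (x c - x d) ^ 2 := by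
  rw [reweightedLapMatrix, dotProduct_add_smul_vecMulVec_mulVec, sub_dotProduct,
    single_one_dotProduct, single_one_dotProduct]

lemma reweightedLapMatrix_isSymm : (reweightedLapMatrix G c d t).IsSymm := by
  classical
  refine IsSymm.add (SimpleGraph.isSymm_lapMatrix ℝ _) (IsSymm.smul ?_ t)
  exact transpose_vecMulVec _ _

open scoped Classical in
lemma reweightedLapMatrix_apply_of_ne {i j : V} (hij : i ≠ j) (hcd : c ≠ d) :
    reweightedLapMatrix G c d t i j =
      if s(i, j) = s(c, d) then -t else if G.Adj i j then -1 else 0 := by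
  have hlap : (G.deleteEdges {s(c, d)}).lapMatrix ℝ i j =
      if s(i, j) = s(c, d) then 0 else if G.Adj i j then -1 else 0 := by
    simp only [SimpleGraph.lapMatrix, SimpleGraph.degMatrix, Matrix.sub_apply,
      diagonal_apply_ne _ hij, SimpleGraph.adjMatrix_apply, SimpleGraph.deleteEdges_adj,
      Set.mem_singleton_iff]
    split_ifs <;> simp_all
  rw [reweightedLapMatrix, Matrix.add_apply, hlap, Matrix.smul_apply, vecMulVec_apply]
  simp only [Sym2.eq_iff, Pi.sub_apply, Pi.single_apply, smul_eq_mul]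
  grind

lemma inS_reweightedLapMatrix (hcd : G.Adj c d) (ht : t ≠ 0) :
    inS G (reweightedLapMatrix G c d t) := by
  classical
  refine ⟨reweightedLapMatrix_isSymm, fun i j hij => ?_⟩
  rw [reweightedLapMatrix_apply_of_ne hij hcd.ne]
  split_ifs with hedge hadj
  · rcases Sym2.eq_iff.1 hedge with ⟨rfl, rfl⟩ | ⟨rfl, rfl⟩ <;> simp [ht, hcd, hcd.symm]
  · simp [hadj]
  · simp [hadj]

lemma reweightedLapMatrix_mulVec_const (r : ℝ) :
    (reweightedLapMatrix G c d t *ᵥ fun _ => r) = 0 := by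
  classical
  have hconst : (fun _ => r : V → ℝ) = r • fun _ => 1 := by ext; simp
  rw [hconst, mulVec_smul, reweightedLapMatrix, add_mulVec,
    SimpleGraph.lapMatrix_mulVec_const_eq_zero, smul_mulVec, vecMulVec_mulVec, sub_dotProduct,
    single_one_dotProduct, single_one_dotProduct]
  simp

/-- If the form takes a negative value at `z` while `x c ≠ x d` for some `x` in the kernel, then
translating `z` along `x` until its `c` and `d` coordinates agree does not change that value; but
there the form is the one of `G` without the edge `cd`. -/
lemma eq_of_reweightedLapMatrix_mulVec_eq_zero {x z : V → ℝ}
    (hx : reweightedLapMatrix G c d t *ᵥ x = 0) (hz : z ⬝ᵥ reweightedLapMatrix G c d t *ᵥ z < 0) :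
    x c = x d := by
  classical
  by_contra hne
  set L := reweightedLapMatrix G c d t
  set y := z - ((z c - z d) / (x c - x d)) • x
  have hyz : y ⬝ᵥ L *ᵥ y = z ⬝ᵥ L *ᵥ z := by
    have hxL : x ᵥ* L = 0 := by
      rw [← mulVec_transpose, reweightedLapMatrix_isSymm.eq, hx]
    rw [mulVec_sub, mulVec_smul, hx, smul_zero, sub_zero, sub_dotProduct, smul_dotProduct,
      dotProduct_mulVec x, hxL, zero_dotProduct, smul_zero, sub_zero]
  have hycd : y c - y d = 0 := by
    simp only [y, Pi.sub_apply, Pi.smul_apply, smul_eq_mul]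
    field_simp [sub_ne_zero.2 hne]
    ring
  rw [dotProduct_reweightedLapMatrix_mulVec, hycd] at hyz
  have := (SimpleGraph.posSemidef_lapMatrix ℝ (G.deleteEdges {s(c, d)})).dotProduct_mulVec_nonneg y
  rw [star_trivial] at this
  linarith

lemma forall_eq_of_reweightedLapMatrix_mulVec_eq_zero (hG : G.Connected) {x z : V → ℝ}
    (hx : reweightedLapMatrix G c d t *ᵥ x = 0) (hz : z ⬝ᵥ reweightedLapMatrix G c d t *ᵥ z < 0)
    (i j : V) : x i = x j := by
  classical
  have hcd := eq_of_reweightedLapMatrix_mulVec_eq_zero hx hz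
  have hdel : (G.deleteEdges {s(c, d)}).lapMatrix ℝ *ᵥ x = 0 := by
    simpa [reweightedLapMatrix, add_mulVec, smul_mulVec, vecMulVec_mulVec, sub_dotProduct, hcd]
      using hx
  rw [SimpleGraph.lapMatrix_mulVec_eq_zero_iff_forall_adj] at hdel
  have hadj : ∀ i j, G.Adj i j → x i = x j := fun i j hij => by
    by_cases hedge : s(i, j) = s(c, d)
    · rcases Sym2.eq_iff.1 hedge with ⟨rfl, rfl⟩ | ⟨rfl, rfl⟩
      exacts [hcd, hcd.symm]
    · exact hdel i j (SimpleGraph.deleteEdges_adj.2 ⟨hij, hedge⟩)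
  exact G.lapMatrix_mulVec_eq_zero_iff_forall_reachable.1
    (G.lapMatrix_mulVec_eq_zero_iff_forall_adj.2 hadj) i j (hG.preconnected i j)

lemma reweightedLapMatrix_apply_self_pos {u v : V} (hvc : v ≠ c) (hvd : v ≠ d)
    (huv : G.Adj v u) : 0 < reweightedLapMatrix G c d t v v := by
  classical
  have hdeg : 0 < (G.deleteEdges {s(c, d)}).degree v := by
    rw [SimpleGraph.degree_pos_iff_exists_adj]
    refine ⟨u, SimpleGraph.deleteEdges_adj.2 ⟨huv, fun h => ?_⟩⟩
    rcases Sym2.eq_iff.1 h with ⟨h, -⟩ | ⟨h, -⟩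
    exacts [hvc h, hvd h]
  simpa [reweightedLapMatrix, SimpleGraph.lapMatrix, SimpleGraph.degMatrix, vecMulVec_apply,
    hvc, hvd] using hdeg

end Laplacian

theorem exists_inS_rayleighMax_eq_one {V : Type*} [Fintype V] {G : SimpleGraph V}
    (hG : G.Connected) (hcard : 3 ≤ Fintype.card V) :
    ∃ C : Matrix V V ℝ, inS G C ∧ rayleighMax C = 1 ∧ rayleighMax (-C) = 1 ∧
      ∀ x, C *ᵥ x = 0 ↔ ∀ i j, x i = x j := by
  classical
  have : Nontrivial V := Fintype.one_lt_card_iff_nontrivial.1 (by omega)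
  obtain ⟨c⟩ := hG.nonempty
  obtain ⟨d, hcd⟩ := hG.preconnected.exists_adj_of_nontrivial c
  obtain ⟨v, hvc, hvd⟩ : ∃ v, v ≠ c ∧ v ≠ d :=
    ENat.exists_ne_ne_of_three_le (by simpa using mod_cast hcard) c d
  obtain ⟨u, hvu⟩ := hG.preconnected.exists_adj_of_nontrivial v
  obtain ⟨t, hbal⟩ := exists_rayleighMax_eq_rayleighMax_neg
    (SimpleGraph.posSemidef_lapMatrix ℝ (G.deleteEdges {s(c, d)}))
    (e := Pi.single c 1 - Pi.single d 1) fun h => by simpa [hcd.ne] using congrFun h c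
  change rayleighMax (reweightedLapMatrix G c d t) =
    rayleighMax (-reweightedLapMatrix G c d t) at hbal
  set L := reweightedLapMatrix G c d t
  have hpos : 0 < rayleighMax L :=
    (reweightedLapMatrix_apply_self_pos hvc hvd hvu).trans_le (apply_self_le_rayleighMax L v)
  obtain ⟨z, -, hz⟩ := exists_eq_rayleighMax (-L)
  have hzneg : z ⬝ᵥ L *ᵥ z < 0 := by
    rw [neg_mulVec, dotProduct_neg] at hz
    linarith
  have ht : t ≠ 0 := by
    intro ht
    have := (SimpleGraph.posSemidef_lapMatrix ℝ
      (G.deleteEdges {s(c, d)})).dotProduct_mulVec_nonneg z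
    rw [star_trivial] at this
    rw [dotProduct_reweightedLapMatrix_mulVec, ht, zero_mul, add_zero] at hzneg
    exact this.not_gt hzneg
  refine ⟨(rayleighMax L)⁻¹ • L, inS_smul (inS_reweightedLapMatrix hcd ht) (inv_ne_zero hpos.ne'),
    ?_, ?_, fun x => ?_⟩
  · rw [rayleighMax_smul _ (inv_nonneg.2 hpos.le), inv_mul_cancel₀ hpos.ne']
  · rw [← smul_neg, rayleighMax_smul _ (inv_nonneg.2 hpos.le), ← hbal, inv_mul_cancel₀ hpos.ne']
  · rw [smul_mulVec, smul_eq_zero_iff_right (inv_ne_zero hpos.ne')]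
    refine ⟨fun hx => forall_eq_of_reweightedLapMatrix_mulVec_eq_zero hG hx hzneg, fun hx => ?_⟩
    rw [show x = fun _ => x c from funext fun i => hx i c]
    exact reweightedLapMatrix_mulVec_const _

section DiagonalDilation

lemma exists_const_dotProduct_self_eq_one {n : Type*} [Fintype n] [Nonempty n] :
    ∃ r : ℝ, r ≠ 0 ∧ (fun _ : n => r) ⬝ᵥ (fun _ => r) = 1 := by
  refine ⟨(√(Fintype.card n))⁻¹, by positivity, ?_⟩
  simp only [dotProduct, Finset.sum_const, Finset.card_univ, nsmul_eq_mul]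
  rw [← mul_inv, Real.mul_self_sqrt (Nat.cast_nonneg _)]
  exact mul_inv_cancel₀ (by positivity)

variable {ι n : Type*} [Fintype ι] [DecidableEq ι] [Fintype n] [DecidableEq n]

/-- The vector `u = B v` is nonzero with `α a * u a = 0`, so a constant `α` vanishes. Then the rows
of `B` are orthonormal and, by `B * C = 0`, all multiples of `v`: there is at most one of them. -/
lemma IsBlockInvolution.exists_apply_ne_of_ker_le_span {K : Type*} [Field K] [Nontrivial ι]
    {α : ι → K} {B : Matrix ι n K} {C : Matrix n n K} (h : IsBlockInvolution (diagonal α) B C)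
    {v : n → K} (hv : C *ᵥ v = 0) (hv0 : v ≠ 0)
    (hker : ∀ x, C *ᵥ x = 0 → ∃ r : K, x = r • v) : ∃ a b, α a ≠ α b := by
  by_contra! hconst
  have hBv : B *ᵥ v ≠ 0 := fun h0 =>
    hv0 (by rw [← h.transpose_mulVec_mulVec hv, h0, mulVec_zero])
  obtain ⟨a, ha⟩ := Function.ne_iff.1 hBv
  have hαa : α a = 0 := by
    have := congrFun (h.mulVec_mulVec_eq_zero hv) a
    rw [mulVec_diagonal] at this
    exact (mul_eq_zero.1 this).resolve_right ha
  have hdiag : diagonal α = 0 := diagonal_eq_zero.2 (funext fun b => (hconst b a).trans hαa)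
  have hBB : B * Bᵀ = 1 := by simpa [hdiag] using h.left
  have hCB : B * C = 0 := by simpa [hdiag] using h.cross
  have hrow : ∀ b, ∃ r : K, B b = r • v := fun b => hker _ <| by
    rw [← h.isSymm_right.eq, mulVec_transpose]
    exact congrFun hCB b
  choose r hr using hrow
  have hdot : ∀ b c, (1 : Matrix ι ι K) b c = r b * r c * (v ⬝ᵥ v) := fun b c => by
    rw [← hBB]
    change B b ⬝ᵥ B c = _
    rw [hr, hr, smul_dotProduct, dotProduct_smul, smul_eq_mul, smul_eq_mul, mul_assoc]
  obtain ⟨b, hba⟩ := exists_ne a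
  have haa := hdot a a
  have hbb := hdot b b
  have hab := hdot a b
  rw [one_apply_eq] at haa hbb
  rw [one_apply_ne hba.symm] at hab
  refine one_ne_zero (α := K) ?_
  linear_combination haa + r a * r a * (v ⬝ᵥ v) * hbb - r a * r b * (v ⬝ᵥ v) * hab

lemma isBlockInvolution_one_sub_vecMulVec {R : Type*} [CommRing R] {e : ι → R} {v : n → R}
    (he : e ⬝ᵥ e = 1) (hv : v ⬝ᵥ v = 1) :
    IsBlockInvolution (1 - vecMulVec e e) (vecMulVec e v) (1 - vecMulVec v v) where
  isSymm_left := isSymm_one.sub (transpose_vecMulVec e e)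
  isSymm_right := isSymm_one.sub (transpose_vecMulVec v v)
  left := by
    simp [Matrix.sub_mul, Matrix.mul_sub, transpose_vecMulVec, vecMulVec_mul_vecMulVec, he, hv]
  cross := by
    simp [Matrix.sub_mul, Matrix.mul_sub, vecMulVec_mul_vecMulVec, he, hv]
  right := by
    simp [Matrix.sub_mul, Matrix.mul_sub, transpose_vecMulVec, vecMulVec_mul_vecMulVec, he, hv]

lemma exists_isBlockInvolution_diagonal_inS_top [Nonempty ι] [Nonempty n] :
    ∃ (α : ι → ℝ) (B : Matrix ι n ℝ) (C : Matrix n n ℝ), IsBlockInvolution (diagonal α) B C ∧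
      inS ⊤ C ∧ ∀ x, C *ᵥ x = 0 ↔ ∀ i j, x i = x j := by
  obtain ⟨a⟩ := ‹Nonempty ι›
  obtain ⟨r, hr, hrr⟩ := exists_const_dotProduct_self_eq_one (n := n)
  have hblock := isBlockInvolution_one_sub_vecMulVec (e := Pi.single a (1 : ℝ)) (by simp) hrr
  have hdiag : 1 - vecMulVec (Pi.single a (1 : ℝ)) (Pi.single a 1) =
      diagonal (1 - Pi.single a 1) := by
    rw [← single_eq_single_vecMulVec_single, ← diagonal_single, ← Matrix.diagonal_one,
      diagonal_sub]
    rfl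
  refine ⟨_, _, _, hdiag ▸ hblock, inS_top_iff.2 ⟨hblock.isSymm_right, fun i j hij => ?_⟩,
    fun x => ⟨fun hx i j => ?_, fun hx => ?_⟩⟩
  · simp [vecMulVec_apply, one_apply_ne hij, hr]
  · rw [sub_mulVec, one_mulVec, vecMulVec_mulVec, sub_eq_zero] at hx
    rw [hx]
    rfl
  · obtain ⟨i⟩ := ‹Nonempty n›
    ext j
    rw [show x = fun _ => x i from funext fun j => hx j i, sub_mulVec, one_mulVec,
      vecMulVec_mulVec]
    simp only [dotProduct, Finset.sum_const, Finset.card_univ, nsmul_eq_mul, Pi.sub_apply,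
      Pi.smul_apply, MulOpposite.smul_eq_mul_unop, MulOpposite.unop_op, Pi.zero_apply] at hrr ⊢
    linear_combination -x i * hrr

theorem exists_isBlockInvolution_diagonal_inS [Nonempty ι] {H : SimpleGraph n}
    (hH : H.Connected) (hcard : Fintype.card n ≤ Fintype.card ι + 2) :
    ∃ (α : ι → ℝ) (B : Matrix ι n ℝ) (C : Matrix n n ℝ), IsBlockInvolution (diagonal α) B C ∧
      inS H C ∧ ∀ x, C *ᵥ x = 0 ↔ ∀ i j, x i = x j := by
  have := hH.nonempty
  rcases le_or_gt 3 (Fintype.card n) with hlarge | hsmall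
  · obtain ⟨C, hC, hmax, hmin, hker⟩ := exists_inS_rayleighMax_eq_one hH hlarge
    obtain ⟨α, B, h⟩ := exists_isBlockInvolution_diagonal_of_rayleighMax
      (isHermitian_iff_isSymm.2 hC.1) hmax hmin hcard
    exact ⟨α, B, C, h, hC, hker⟩
  · have htop : H = ⊤ := by
      refine eq_top_iff.2 fun i j hij => ?_
      have : Nontrivial n := ⟨i, j, hij⟩
      obtain ⟨l, hil⟩ := hH.preconnected.exists_adj_of_nontrivial i
      obtain rfl | hjl := eq_or_ne j l
      · exact hil
      · exact absurd (Fintype.two_lt_card_iff.2 ⟨i, j, l, hij, hil.ne, hjl⟩) (by omega)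
    exact htop ▸ exists_isBlockInvolution_diagonal_inS_top

end DiagonalDilation

section MixableBlock

variable {α β : Type*} [Fintype α] [DecidableEq α] [Fintype β] [DecidableEq β]

/-- A solution of `q(K ∨ H) = 2` for a complete graph `K`, up to the zeros of `B`, that can serve as
a diagonal block of a larger solution. When the unit kernel vectors `v i` of the blocks are mixed by
an orthogonal matrix `W`, the `(i, i)` block of `B` becomes `B (1 + (w - 1) v vᵀ)` with `w = W i i`,
and the `(i, j)` block becomes a nonzero multiple of `(B i *ᵥ v i) (v j)ᵀ`. -/
structure IsMixableBlock (H : SimpleGraph β) (w : ℝ) (A : Matrix α α ℝ) (B : Matrix α β ℝ)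
    (C : Matrix β β ℝ) (v : β → ℝ) : Prop extends IsBlockInvolution A B C where
  inS_left : inS ⊤ A
  inS_right : inS H C
  dotProduct_self : v ⬝ᵥ v = 1
  ker : C *ᵥ v = 0
  apply_ne_zero : ∀ x, v x ≠ 0
  mulVec_ne_zero : ∀ a, (B *ᵥ v) a ≠ 0
  mixed_ne_zero : ∀ a x, B a x + (w - 1) * ((B *ᵥ v) a * v x) ≠ 0

theorem exists_isMixableBlock [Nonempty α] {H : SimpleGraph β} (hH : H.Connected)
    (hcard : Fintype.card β ≤ Fintype.card α + 2) {w : ℝ} (hw : w ≠ 0) :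
    ∃ (A : Matrix α α ℝ) (B : Matrix α β ℝ) (C : Matrix β β ℝ) (v : β → ℝ),
      IsMixableBlock H w A B C v := by
  have := hH.nonempty
  obtain ⟨d, B, C, h, hC, hker⟩ := exists_isBlockInvolution_diagonal_inS (ι := α) hH hcard
  obtain ⟨r, hr, hrr⟩ := exists_const_dotProduct_self_eq_one (n := β)
  set v : β → ℝ := fun _ => r
  have hv : C *ᵥ v = 0 := (hker v).2 fun _ _ => rfl
  have hv0 : v ≠ 0 := fun h0 => by simp [h0] at hrr
  have hd : Nontrivial α → ∃ a b, d a ≠ d b := fun _ =>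
    h.exists_apply_ne_of_ker_le_span hv hv0 fun x hx => by
      obtain ⟨i⟩ := ‹Nonempty β›
      exact ⟨x i / r, funext fun j => by simp [v, hr, (hker x).1 hx i j]⟩
  let Y : Option β → β → ℝ :=
    fun k => k.elim v fun x => Pi.single x 1 + ((w - 1) * v x) • v
  have hY : ∀ k, B *ᵥ Y k ≠ 0 := by
    rintro (_ | x)
    · exact h.mulVec_ne_zero hv (by simp [Y, hrr])
    · have hdot : v ⬝ᵥ Y (some x) = w * v x := by
        simp only [Y, Option.elim_some, dotProduct_add, dotProduct_single_one, dotProduct_smul,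
          hrr, smul_eq_mul]
        ring
      exact h.mulVec_ne_zero hv (hdot ▸ mul_ne_zero hw hr)
  obtain ⟨u, huY, hud⟩ := exists_householder_generic d hd (fun k => B *ᵥ Y k) hY
  have hU := householder_transpose u
  have hconj := h.conj (U := householder u) (V := 1) (by rw [hU, householder_mul_self_s9]) (by simp)
  simp only [hU, Matrix.one_mul, Matrix.mul_one, transpose_one] at hconj
  simp only [mulVec_mulVec] at huY
  refine ⟨_, _, C, v, hconj, inS_top_iff.2 ⟨hconj.isSymm_left, hud⟩, hC, hrr, hv, fun _ => hr,
    huY none, fun a x => ?_⟩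
  convert huY (some x) a using 1
  simp only [Y, Option.elim_some, mulVec_add, mulVec_smul, mulVec_single_one, Pi.add_apply,
    col_apply, Pi.smul_apply, smul_eq_mul]
  ring

end MixableBlock

section MixFrame

variable {n ι R : Type*} [DecidableEq n] [Fintype ι] [DecidableEq ι] [CommRing R]

/-- The matrix acting as `W` on the span of the columns of `V`, in the frame given by these columns,
and as the identity on its orthogonal complement; the columns of `V` are meant to be orthonormal. -/
def mixFrame (V : Matrix n ι R) (W : Matrix ι ι R) : Matrix n n R :=
  1 + V * (W - 1) * Vᵀ

lemma mixFrame_transpose (V : Matrix n ι R) (W : Matrix ι ι R) :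
    (mixFrame V W)ᵀ = mixFrame V Wᵀ := by
  simp [mixFrame, Matrix.mul_assoc]

lemma mixFrame_one (V : Matrix n ι R) : mixFrame V 1 = 1 := by simp [mixFrame]

variable [Fintype n] {V : Matrix n ι R} {W : Matrix ι ι R}

lemma mixFrame_mul_mixFrame (hV : Vᵀ * V = 1) (W' : Matrix ι ι R) :
    mixFrame V W * mixFrame V W' = mixFrame V (W * W') := by
  have hcancel : V * (W - 1) * Vᵀ * (V * (W' - 1) * Vᵀ) = V * ((W - 1) * (W' - 1)) * Vᵀ := by
    simp only [Matrix.mul_assoc, matrix_mul_mul_cancel_left hV]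
  have hsub : W * W' - 1 = (W - 1) + (W' - 1) + (W - 1) * (W' - 1) := by noncomm_ring
  simp only [mixFrame, hsub, Matrix.mul_add, Matrix.add_mul, Matrix.one_mul, Matrix.mul_one,
    hcancel]
  abel

lemma mul_mixFrame {m : Type*} (M : Matrix m n R) :
    M * mixFrame V W = M + M * V * (W - 1) * Vᵀ := by
  simp [mixFrame, Matrix.mul_add, Matrix.mul_assoc]

lemma mixFrame_mul_mul_transpose {C : Matrix n n R} (hC : C.IsSymm) (hCV : C * V = 0) :
    mixFrame V W * C * (mixFrame V W)ᵀ = C := by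
  have hfix : ∀ W : Matrix ι ι R, C * mixFrame V W = C := fun W => by simp [mul_mixFrame, hCV]
  have hfix' := congrArg transpose (hfix Wᵀ)
  rw [transpose_mul, mixFrame_transpose, transpose_transpose, hC.eq] at hfix'
  rw [hfix', mixFrame_transpose, hfix]

end MixFrame

section SigmaColumns

variable {ι R : Type*} [DecidableEq ι] [CommRing R] {α β : ι → Type*}

/-- The matrix whose `j`-th column is `v j`, extended by zero outside the `j`-th summand. -/
def sigmaColumns (v : ∀ i, β i → R) : Matrix (Σ i, β i) ι R :=
  of fun x j => if x.1 = j then v x.1 x.2 else 0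

variable [Fintype ι]

lemma sigmaColumns_mul_mul_transpose_apply (u : ∀ i, α i → R) (v : ∀ i, β i → R)
    (M : Matrix ι ι R) (x : Σ i, α i) (y : Σ i, β i) :
    (sigmaColumns u * M * (sigmaColumns v)ᵀ) x y = M x.1 y.1 * (u x.1 x.2 * v y.1 y.2) := by
  simp only [sigmaColumns, Matrix.mul_apply, of_apply, ite_mul, zero_mul, Finset.sum_ite_eq,
    Finset.mem_univ, ↓reduceIte, transpose_apply, mul_ite, mul_zero]
  ring

variable [∀ i, Fintype (β i)]

lemma sigmaColumns_transpose_mul_self {v : ∀ i, β i → R} (hv : ∀ i, v i ⬝ᵥ v i = 1) :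
    (sigmaColumns v)ᵀ * sigmaColumns v = 1 := by
  ext i j
  rw [Matrix.mul_apply, Fintype.sum_sigma, Fintype.sum_eq_single i fun l hl => by
    simp [sigmaColumns, hl]]
  rcases eq_or_ne i j with rfl | hij
  · simpa [sigmaColumns, dotProduct] using hv i
  · simp [sigmaColumns, hij]

lemma blockDiagonal'_mul_sigmaColumns (M : ∀ i, Matrix (α i) (β i) R) (v : ∀ i, β i → R) :
    blockDiagonal' M * sigmaColumns v = sigmaColumns fun i => M i *ᵥ v i := by
  ext ⟨i, a⟩ j
  rw [Matrix.mul_apply, Fintype.sum_sigma, Fintype.sum_eq_single i fun l hl => by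
    simp [blockDiagonal'_apply_ne _ _ _ hl.symm]]
  rcases eq_or_ne i j with rfl | hij
  · simp [sigmaColumns, mulVec, dotProduct]
  · simp [sigmaColumns, hij]

end SigmaColumns

section Join

variable {ι : Type*} [Fintype ι] [DecidableEq ι]

lemma exists_transpose_mul_self_eq_one_forall_ne_zero :
    ∃ W : Matrix ι ι ℝ, Wᵀ * W = 1 ∧ ∀ i j, W i j ≠ 0 := by
  obtain ⟨f, hf⟩ := exists_injective_nat ι
  obtain ⟨w, hw, -⟩ := exists_householder_generic (fun i => (f i : ℝ))
    (fun _ => (exists_pair_ne ι).imp fun i => Exists.imp fun j hij => by simpa using hf.ne hij)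
    (fun j : ι => Pi.single j (1 : ℝ)) (by simp)
  refine ⟨householder w, ?_, fun i j => ?_⟩
  · rw [householder_transpose, householder_mul_self_s9]
  · simpa using hw j i

variable {α β : ι → Type*} [∀ i, Fintype (α i)] [∀ i, DecidableEq (α i)] [∀ i, Fintype (β i)]
  [∀ i, DecidableEq (β i)] {H : ∀ i, SimpleGraph (β i)}

theorem exists_inS_graphJoin_mul_self_eq_one_s9 {W : Matrix ι ι ℝ} (hW : Wᵀ * W = 1)
    (hW0 : ∀ i j, W i j ≠ 0) {A : ∀ i, Matrix (α i) (α i) ℝ} {B : ∀ i, Matrix (α i) (β i) ℝ}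
    {C : ∀ i, Matrix (β i) (β i) ℝ} {v : ∀ i, β i → ℝ}
    (h : ∀ i, IsMixableBlock (H i) (W i i) (A i) (B i) (C i) (v i)) :
    ∃ M, inS (graphJoin (sigmaGraph fun i => (⊤ : SimpleGraph (α i))) (sigmaGraph H)) M ∧
      M * M = 1 := by
  set O := mixFrame (sigmaColumns v) W
  have hO : Oᵀ * O = 1 := by
    rw [mixFrame_transpose, mixFrame_mul_mixFrame
      (sigmaColumns_transpose_mul_self fun i => (h i).dotProduct_self), hW, mixFrame_one]
  have hCV : blockDiagonal' C * sigmaColumns v = 0 := by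
    rw [blockDiagonal'_mul_sigmaColumns, funext fun i => (h i).ker]
    ext
    simp [sigmaColumns]
  have hblock := IsBlockInvolution.blockDiagonal' fun i => (h i).toIsBlockInvolution
  have hconj := hblock.conj (U := 1) (by simp) hO
  rw [mixFrame_mul_mul_transpose hblock.isSymm_right hCV] at hconj
  simp only [Matrix.one_mul, Matrix.mul_one, transpose_one] at hconj
  refine ⟨_, inS_graphJoin_fromBlocks (inS_blockDiagonal' fun i => (h i).inS_left)
    (inS_blockDiagonal' fun i => (h i).inS_right) ?_, hconj.fromBlocks_mul_self⟩
  rintro ⟨i, a⟩ ⟨j, x⟩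
  rw [mixFrame_transpose, mul_mixFrame, blockDiagonal'_mul_sigmaColumns, Matrix.add_apply,
    sigmaColumns_mul_mul_transpose_apply]
  rcases eq_or_ne i j with rfl | hij
  · simpa using (h i).mixed_ne_zero a x
  · simpa [blockDiagonal'_apply_ne _ _ _ hij, one_apply_ne hij, hW0 j i] using
      ⟨(h i).mulVec_ne_zero a, (h j).apply_ne_zero x⟩

theorem statement9_general [Nonempty ι] [∀ i, Nonempty (α i)] (hH : ∀ i, (H i).Connected)
    (hcard : ∀ i, Fintype.card (β i) ≤ Fintype.card (α i) + 2) :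
    qGraph (graphJoin (sigmaGraph fun i => (⊤ : SimpleGraph (α i))) (sigmaGraph H)) = 2 := by
  obtain ⟨W, hW, hW0⟩ := exists_transpose_mul_self_eq_one_forall_ne_zero (ι := ι)
  choose A B C v h using fun i =>
    exists_isMixableBlock (α := α i) (hH i) (hcard i) (hW0 i i)
  obtain ⟨M, hM, hMM⟩ := exists_inS_graphJoin_mul_self_eq_one_s9 hW hW0 h
  obtain ⟨i⟩ := ‹Nonempty ι›
  obtain ⟨a⟩ := ‹∀ i, Nonempty (α i)› i
  obtain ⟨x⟩ := (hH i).nonempty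
  exact qGraph_eq_two (graphJoin_adj_inl_inr _ _ ⟨i, a⟩ ⟨i, x⟩) hM hMM

end Join

/-- Theorem 3.4, second part: if `H_i` are connected graphs with
`m_i + 2 ≥ |H_i|` for each `i ∈ [k]`, then `q((⋃ K_{m_i}) ∨ (⋃ H_i)) = 2`. -/
theorem statement9 (k : ℕ) (hk : 1 ≤ k) (m p : Fin k → ℕ) (hm : ∀ i, 1 ≤ m i)
    (H : ∀ i, SimpleGraph (Fin (p i))) (hH : ∀ i, (H i).Connected)
    (hsize : ∀ i, p i ≤ m i + 2) :
    qGraph (graphJoin (sigmaGraph (fun i => (⊤ : SimpleGraph (Fin (m i)))))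
      (sigmaGraph H)) = 2 := by
  have : Nonempty (Fin k) := ⟨⟨0, hk⟩⟩
  have : ∀ i, Nonempty (Fin (m i)) := fun i => ⟨⟨0, hm i⟩⟩
  exact statement9_general hH (by simpa using hsize)
end
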